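/- arXiv:2203.06733 — 4 statements merged into one kernel-verified Lean document; each statement's English description precedes it below -/
import Mathlib

section
/- Let f = Σ_{λ∈Λ} Σ_{‖k‖≤K} p_k(λ) D^k δ_λ be a tempered distribution on ℝ^d whose support Λ is polynomially discrete. Then there exists T < ∞ such that for every multi-index k with ‖k‖ ≤ K one has p_k(λ) = O(|λ|^T) as λ → ∞. -/
open MeasureTheory SchwartzMap Metric Set
open scoped Pointwise RealInnerProductSpace ENNReal NNReal

noncomputable section

/-- Euclidean space `ℝ^d`. -/
abbrev Rd (d : ℕ) : Type := EuclideanSpace ℝ (Fin d)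

/-- The space `S*(ℝ^d)` of tempered distributions: continuous linear functionals
on the Schwartz space `S(ℝ^d)`. -/
abbrev TemperedDist (d : ℕ) : Type := SchwartzMap (Rd d) ℂ →L[ℂ] ℂ

/-- The Fourier transform of a tempered distribution: `f̂(φ) = f(φ̂)`. -/
def fourierTD {d : ℕ} (f : TemperedDist d) : TemperedDist d :=
  f.comp (fourierTransformCLM ℂ)

/-- The support of a tempered distribution: `x ∈ supp f` iff for every open
neighbourhood `U` of `x` there is a smooth compactly supported test function
supported in `U` on which `f` does not vanish. -/
def tdSupport {d : ℕ} (f : TemperedDist d) : Set (Rd d) :=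
  {x | ∀ U : Set (Rd d), IsOpen U → x ∈ U →
    ∃ φ : SchwartzMap (Rd d) ℂ, HasCompactSupport (⇑φ) ∧ tsupport (⇑φ) ⊆ U ∧ f φ ≠ 0}

/-- A set is locally finite if its intersection with every ball is finite. -/
def LocFinite {d : ℕ} (A : Set (Rd d)) : Prop :=
  ∀ (x : Rd d) (r : ℝ), (A ∩ Metric.ball x r).Finite

/-- A set is uniformly discrete if distances between distinct points are
bounded below by a positive constant. -/
def UniformlyDiscrete {d : ℕ} (A : Set (Rd d)) : Prop :=
  ∃ η > (0:ℝ), ∀ x ∈ A, ∀ y ∈ A, x ≠ y → η ≤ dist x y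

/-- A set is polynomially discrete (p-discrete) if
`|x - x'| ≥ c min{1, |x|^{-h}}` for distinct points `x, x'` of the set. -/
def PDiscrete {d : ℕ} (A : Set (Rd d)) : Prop :=
  ∃ c > (0:ℝ), ∃ h > (0:ℝ), ∀ x ∈ A, ∀ y ∈ A, x ≠ y →
    c * (if ‖x‖ ≤ 1 then 1 else ‖x‖ ^ (-h)) ≤ dist x y

/-- A set has bounded density if it is locally finite and the number of its
points in balls of radius 1 is uniformly bounded. -/
def BoundedDensity {d : ℕ} (A : Set (Rd d)) : Prop :=
  LocFinite A ∧ ∃ N : ℕ, ∀ x : Rd d, (A ∩ Metric.ball x 1).ncard ≤ N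

/-- A set is relatively dense if it intersects every ball of some fixed radius `R`. -/
def RelDense {d : ℕ} (A : Set (Rd d)) : Prop :=
  ∃ R : ℝ, 0 < R ∧ ∀ x : Rd d, ∃ a ∈ A, dist x a ≤ R

/-- A full-rank lattice in `ℝ^d` is the image of `ℤ^d` under an invertible
linear operator. -/
def IsFullRankLattice {d : ℕ} (L : Set (Rd d)) : Prop :=
  ∃ T : Rd d →ₗ[ℝ] Rd d, Function.Bijective T ∧
    L = T '' {x : Rd d | ∀ i, ∃ n : ℤ, x i = (n : ℝ)}

/-- The multi-indices `k ∈ (ℕ ∪ {0})^d` with `‖k‖ = k₁ + ⋯ + k_d ≤ K`. -/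
def mIdx (d K : ℕ) : Finset (Fin d → ℕ) :=
  (Finset.Iic fun _ => K).filter fun k => (∑ i, k i) ≤ K

/-- Partial derivative in the `i`-th coordinate direction. -/
def pderiv' {d : ℕ} (i : Fin d) (φ : Rd d → ℂ) : Rd d → ℂ :=
  fun x => fderiv ℝ φ x (EuclideanSpace.single i (1:ℝ))

/-- The mixed partial derivative `D^k = ∂^{k₁}_{x₁} ⋯ ∂^{k_d}_{x_d}`. -/
def Dmulti {d : ℕ} (k : Fin d → ℕ) : (Rd d → ℂ) → (Rd d → ℂ) :=
  ((List.finRange d).map fun i => (pderiv' i)^[k i]).foldr (· ∘ ·) id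

/-- The action of `D^k δ_λ` on a test function: `φ ↦ (-1)^{‖k‖} (D^k φ)(λ)`. -/
def dkDelta {d : ℕ} (k : Fin d → ℕ) (lam : Rd d) (φ : SchwartzMap (Rd d) ℂ) : ℂ :=
  (-1 : ℂ) ^ (∑ i, k i) * Dmulti k (⇑φ) lam

/-- The exponential `e^{2πi⟨x,w⟩}`. -/
def e2pi {d : ℕ} (x w : Rd d) : ℂ :=
  Complex.exp (((2 * Real.pi : ℝ) : ℂ) * Complex.I * ((⟪x, w⟫ : ℝ) : ℂ))

/-- A trigonometric polynomial: a finite sum `Σ c_ω e^{2πi⟨x,ω⟩}`. -/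
def IsTrigPoly {d : ℕ} (P : Rd d → ℂ) : Prop :=
  ∃ (n : ℕ) (cc : Fin n → ℂ) (w : Fin n → Rd d),
    ∀ x, P x = ∑ i, cc i * e2pi x (w i)

/-- The monomial `x^m = x₁^{m₁} ⋯ x_d^{m_d}` (as a complex number). -/
def monom {d : ℕ} (m : Fin d → ℕ) (x : Rd d) : ℂ := ((∏ i, (x i) ^ (m i) : ℝ) : ℂ)

/-- The total variation of the pure point measure with masses `b` on the open
ball `B(0,r)`: `Σ_{|γ| < r} |b(γ)|` (as an extended nonnegative real). -/
def ballVar {d : ℕ} (b : Rd d → ℂ) (r : ℝ) : ℝ≥0∞ :=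
  ∑' γ : Rd d, if ‖γ‖ < r then (‖b γ‖₊ : ℝ≥0∞) else 0

/-- The pure point measure `μ = Σ_λ a(λ) δ_λ` belongs to `S*(ℝ^d)` and is
represented there by the tempered distribution `f`: its support is countable,
`Σ_λ |a(λ)| |φ(λ)| < ∞` for every Schwartz function `φ`, and the (automatically
continuous) functional `φ ↦ Σ_λ a(λ) φ(λ)` coincides with `f`. -/
def RepMeasure {d : ℕ} (a : Rd d → ℂ) (f : TemperedDist d) : Prop :=
  {x | a x ≠ 0}.Countable ∧
  (∀ φ : SchwartzMap (Rd d) ℂ, Summable fun lam => ‖a lam‖ * ‖φ lam‖) ∧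
  (∀ φ : SchwartzMap (Rd d) ℂ, f φ = ∑' lam, a lam * φ lam)

/-- A continuous function on `ℝ^d` is almost periodic if for every `ε > 0` its
set of `ε`-almost periods is relatively dense. -/
def APFunction {d : ℕ} (g : Rd d → ℂ) : Prop :=
  Continuous g ∧ ∀ ε > (0:ℝ), RelDense {τ : Rd d | ∀ t, ‖g (t + τ) - g t‖ < ε}

/-- A tempered distribution is almost periodic if for every smooth compactly
supported `ψ` the function `t ↦ f(ψ(t - ·))` is almost periodic. -/
def APDistribution {d : ℕ} (f : TemperedDist d) : Prop :=
  ∀ ψ : Rd d → ℂ, ContDiff ℝ (⊤ : ℕ∞) ψ → HasCompactSupport ψ →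
    ∀ Φ : Rd d → SchwartzMap (Rd d) ℂ, (∀ t y, Φ t y = ψ (t - y)) →
      APFunction fun t => f (Φ t)

open scoped ContDiff Topology in
lemma exists_w (ρ : ℝ) (hρ : 0 < ρ) (n : ℕ) : ∃ w : ℝ → ℂ, ContDiff ℝ ∞ w ∧
    (∀ t, ρ ≤ |t| → w t = 0) ∧ ∀ m, iteratedDeriv m w 0 = if m = n then 1 else 0 := by
  let β : ContDiffBump (0:ℝ) := ⟨ρ/2, ρ, by positivity, by linarith⟩
  have hs : ContDiff ℝ ∞ (fun t : ℝ => (β t * (t ^ n / (n.factorial : ℝ)))) := by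
    exact β.contDiff.mul ((contDiff_id.pow n).div_const _)
  refine ⟨fun t => (β t * (t ^ n / (n.factorial : ℝ))) • (1:ℂ), hs.smul contDiff_const, ?_, ?_⟩
  · intro t ht
    have : β t = 0 := β.zero_of_le_dist (by simpa [β] using ht)
    simp [this]
  · intro m
    rw [iteratedDeriv_smul_const (hs.contDiffAt.of_le (by exact_mod_cast le_top))]
    have he : (fun t : ℝ => (β t * (t ^ n / (n.factorial : ℝ)))) =ᶠ[𝓝 0]
        fun t => t ^ n / (n.factorial : ℝ) := by
      filter_upwards [β.eventuallyEq_one] with t ht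
      simp [ht]
    rw [he.iteratedDeriv_eq, iteratedDeriv_div_const, iteratedDeriv_pow]
    split_ifs with h
    · subst h
      simp [Nat.descFactorial_self, Nat.factorial_ne_zero]
    · rcases lt_or_gt_of_ne h with h | h
      · have : n - m ≠ 0 := by omega
        simp [this]
      · simp [Nat.descFactorial_of_lt h]

/-- product function -/
def prodF {d : ℕ} (u : Fin d → ℝ → ℂ) : Rd d → ℂ := fun z => ∏ i, u i (z i)

open scoped ContDiff in
lemma prodF_contDiff {d : ℕ} (u : Fin d → ℝ → ℂ) (hu : ∀ i, ContDiff ℝ ∞ (u i)) :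
    ContDiff ℝ ∞ (prodF u) := by
  unfold prodF
  apply contDiff_prod
  intro i _
  exact (hu i).comp (EuclideanSpace.proj (𝕜 := ℝ) i).contDiff

open scoped ContDiff in
lemma pderiv_prodF {d : ℕ} (u : Fin d → ℝ → ℂ) (hu : ∀ i, ContDiff ℝ ∞ (u i)) (i : Fin d) :
    pderiv' i (prodF u) = prodF (Function.update u i (deriv (u i))) := by
  funext z
  have h1 : ∀ j ∈ (Finset.univ : Finset (Fin d)), HasFDerivAt (fun z : Rd d => u j (z j))
      ((ContinuousLinearMap.toSpanSingleton ℝ (deriv (u j) (z j))).comp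
        (EuclideanSpace.proj (𝕜 := ℝ) j)) z := by
    intro j _
    have h2 : HasDerivAt (u j) (deriv (u j) (z j)) (z j) :=
      ((hu j).differentiable (by simp) _).hasDerivAt
    exact h2.hasFDerivAt.comp z (EuclideanSpace.proj (𝕜 := ℝ) j).hasFDerivAt
  have h3 := HasFDerivAt.finsetProd h1
  unfold pderiv' prodF
  rw [h3.fderiv]
  simp only [ContinuousLinearMap.sum_apply, ContinuousLinearMap.smul_apply,
    ContinuousLinearMap.comp_apply, ContinuousLinearMap.toSpanSingleton_apply]
  rw [Finset.sum_eq_single i]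
  · rw [← Finset.mul_prod_erase Finset.univ _ (Finset.mem_univ i), mul_comm]
    simp only [smul_eq_mul, Function.update_self]
    congr 1
    · apply Finset.prod_congr rfl
      intro j hj
      rw [Function.update_of_ne (Finset.ne_of_mem_erase hj)]
    · simp
  · intro j _ hj
    simp [hj]
  · simp

open scoped ContDiff in
lemma cd_iter {v : ℝ → ℂ} (hv : ContDiff ℝ ∞ v) (n : ℕ) : ContDiff ℝ ∞ (iteratedDeriv n v) := by
  exact hv.iterate_deriv n |> fun h => by rw [iteratedDeriv_eq_iterate]; exact h

open scoped ContDiff in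
lemma cd_update {d : ℕ} {u : Fin d → ℝ → ℂ} (hu : ∀ i, ContDiff ℝ ∞ (u i)) (i : Fin d)
    {v : ℝ → ℂ} (hv : ContDiff ℝ ∞ v) (j : Fin d) : ContDiff ℝ ∞ (Function.update u i v j) := by
  by_cases h : j = i
  · subst h; simpa using hv
  · simpa [Function.update_of_ne h] using hu j

open scoped ContDiff in
lemma pderiv_iter_prodF {d : ℕ} (u : Fin d → ℝ → ℂ) (hu : ∀ i, ContDiff ℝ ∞ (u i)) (i : Fin d)
    (n : ℕ) : (pderiv' i)^[n] (prodF u) = prodF (Function.update u i (iteratedDeriv n (u i))) := by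
  induction n with
  | zero => simp
  | succ n ih =>
    rw [Function.iterate_succ_apply', ih, pderiv_prodF _ (cd_update hu i (cd_iter (hu i) n))]
    simp [iteratedDeriv_succ]

open scoped ContDiff in
lemma Dlist_prodF {d : ℕ} (k : Fin d → ℕ) (u : Fin d → ℝ → ℂ) (hu : ∀ i, ContDiff ℝ ∞ (u i))
    (l : List (Fin d)) (hl : l.Nodup) :
    ((l.map fun i => (pderiv' i)^[k i]).foldr (· ∘ ·) id) (prodF u)
      = prodF (fun i => if i ∈ l then iteratedDeriv (k i) (u i) else u i) := by
  induction l with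
  | nil => simp
  | cons a l ih =>
    rw [List.nodup_cons] at hl
    simp only [List.map_cons, List.foldr_cons, Function.comp_apply]
    rw [ih hl.2, pderiv_iter_prodF]
    · congr 1
      funext i
      by_cases h : i = a
      · subst h; simp [hl.1]
      · simp [h]
    · intro i
      split_ifs
      · exact cd_iter (hu i) _
      · exact hu i

open scoped ContDiff in
lemma Dmulti_prodF {d : ℕ} (k : Fin d → ℕ) (u : Fin d → ℝ → ℂ) (hu : ∀ i, ContDiff ℝ ∞ (u i)) :
    Dmulti k (prodF u) = prodF (fun i => iteratedDeriv (k i) (u i)) := by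
  unfold Dmulti
  rw [Dlist_prodF k u hu _ (List.nodup_finRange d)]
  simp

lemma norm_lt_of_coord {d : ℕ} (z : Rd d) (r : ℝ) (hr : 0 < r)
    (h : ∀ i, |z i| ≤ r / (d + 1)) : ‖z‖ < r := by
  have h1 : ‖z‖ ≤ ∑ i, |z i| := by
    calc ‖z‖ = ‖∑ i, EuclideanSpace.single i (z i)‖ := by
          congr 1; ext j; simp [Finset.sum_apply, Pi.single_apply]
      _ ≤ ∑ i, ‖EuclideanSpace.single i (z i)‖ := norm_sum_le _ _
      _ = _ := by simp
  have h2 : ∑ i, |z i| ≤ d * (r / (d + 1)) := by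
    calc _ ≤ ∑ i : Fin d, r / ((d:ℝ) + 1) := Finset.sum_le_sum fun i _ => h i
      _ = _ := by simp
  have h3 : d * (r / ((d:ℝ) + 1)) < r := by
    rw [mul_div_assoc', div_lt_iff₀ (by positivity)]
    nlinarith
  linarith

lemma prodF_hcs {d : ℕ} (u : Fin d → ℝ → ℂ) (x : Rd d) (r : ℝ) (hr : 0 < r)
    (h : ∀ i t, r / (d + 1) ≤ |t - x i| → u i t = 0) : HasCompactSupport (prodF u) := by
  apply HasCompactSupport.intro (isCompact_closedBall x r)
  intro z hz
  by_contra h0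
  apply hz
  rw [mem_closedBall, dist_eq_norm]
  apply (norm_lt_of_coord _ _ hr _).le
  intro i
  by_contra h1
  apply h0
  exact Finset.prod_eq_zero (Finset.mem_univ i) (h i _ (by simpa using (not_le.1 h1).le))

open scoped ContDiff in
lemma seminorm_scale {d : ℕ} (g : SchwartzMap (Rd d) ℂ) (m n : ℕ) : ∃ C : ℝ, 0 ≤ C ∧
    ∀ (x : Rd d) (r : ℝ), 1 ≤ ‖x‖ → 0 < r → r ≤ 1 → ∀ φ : SchwartzMap (Rd d) ℂ,
    (∀ y, φ y = g (r⁻¹ • (y - x))) →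
    SchwartzMap.seminorm ℂ m n φ ≤ C * (‖x‖ ^ m * (r⁻¹) ^ n) := by
  refine ⟨2 ^ m * (Finset.Iic (m, n)).sup (fun m => SchwartzMap.seminorm ℂ m.1 m.2) g,
    by positivity, ?_⟩
  intro x r hx hr hr1 φ hφ
  apply SchwartzMap.seminorm_le_bound
  · positivity
  intro y
  have h1 : iteratedFDeriv ℝ n φ y = (r⁻¹) ^ n • iteratedFDeriv ℝ n g (r⁻¹ • (y - x)) := by
    have e : (φ : Rd d → ℂ) = fun y => (fun z => g (r⁻¹ • z)) (y - x) := funext hφ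
    have e1 := iteratedFDeriv_comp_sub (𝕜 := ℝ) (f := fun z => g (r⁻¹ • z)) n x y
    have e2 := iteratedFDeriv_comp_const_smul (i := n) r⁻¹ (g.smooth n)
    rw [e]
    refine e1.trans ?_
    rw [e2]
  rw [h1, norm_smul]
  have h2 := SchwartzMap.one_add_le_sup_seminorm_apply (𝕜 := ℂ) (m := (m, n)) (k := m) (n := n)
    le_rfl le_rfl g (r⁻¹ • (y - x))
  set z := r⁻¹ • (y - x) with hz
  have h3 : ‖y‖ ≤ ‖x‖ * (1 + ‖z‖) := by
    have : y = x + r • z := by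
      rw [hz, smul_smul, mul_inv_cancel₀ hr.ne', one_smul]; abel
    calc ‖y‖ ≤ ‖x‖ + ‖r • z‖ := by rw [this]; exact norm_add_le _ _
      _ ≤ ‖x‖ + 1 * ‖z‖ := by rw [norm_smul, Real.norm_of_nonneg hr.le]; gcongr
      _ ≤ _ := by nlinarith [norm_nonneg z]
  calc ‖y‖ ^ m * (‖(r⁻¹) ^ n‖ * ‖iteratedFDeriv ℝ n g z‖)
      ≤ (‖x‖ * (1 + ‖z‖)) ^ m * ((r⁻¹) ^ n * ‖iteratedFDeriv ℝ n g z‖) := by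
        rw [Real.norm_of_nonneg (by positivity)]; gcongr
    _ = ((1 + ‖z‖) ^ m * ‖iteratedFDeriv ℝ n g z‖) * (‖x‖ ^ m * (r⁻¹) ^ n) := by rw [mul_pow]; ring
    _ ≤ _ := by gcongr

lemma td_bound {d : ℕ} (f : TemperedDist d) : ∃ N : ℕ, ∀ g : SchwartzMap (Rd d) ℂ,
    ∃ C : ℝ, 0 ≤ C ∧ ∀ (x : Rd d) (r : ℝ), 1 ≤ ‖x‖ → 0 < r → r ≤ 1 →
    ∀ φ : SchwartzMap (Rd d) ℂ, (∀ y, φ y = g (r⁻¹ • (y - x))) →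
    ‖f φ‖ ≤ C * (‖x‖ ^ N * (r⁻¹) ^ N) := by
  obtain ⟨s, C, -, hC⟩ := Seminorm.bound_of_continuous (schwartz_withSeminorms ℂ (Rd d) ℂ)
    ((normSeminorm ℂ ℂ).comp f.toLinearMap) (continuous_norm.comp f.continuous)
  refine ⟨∑ i ∈ s, (i.1 + i.2), fun g => ?_⟩
  choose D hD0 hD using fun i : ℕ × ℕ => seminorm_scale g i.1 i.2
  refine ⟨C * ∑ i ∈ s, D i, mul_nonneg C.2 (Finset.sum_nonneg fun i _ => hD0 i), ?_⟩
  intro x r hx hr hr1 φ hφ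
  have hri : 1 ≤ r⁻¹ := (one_le_inv₀ hr).2 hr1
  have h1 : ‖f φ‖ ≤ C * (s.sup (schwartzSeminormFamily ℂ (Rd d) ℂ)) φ := hC φ
  rw [mul_assoc]
  refine h1.trans (mul_le_mul_of_nonneg_left ?_ C.2)
  apply Seminorm.finset_sup_apply_le
  · exact mul_nonneg (Finset.sum_nonneg fun i _ => hD0 i) (by positivity)
  intro i hi
  refine (hD i x r hx hr hr1 φ hφ).trans ?_
  have hN : i.1 + i.2 ≤ ∑ i ∈ s, (i.1 + i.2) :=
    Finset.single_le_sum (f := fun i : ℕ × ℕ => i.1 + i.2) (fun _ _ => Nat.zero_le _) hi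
  gcongr
  · exact Finset.sum_nonneg fun i _ => hD0 i
  · exact Finset.single_le_sum (fun i _ => hD0 i) hi
  · omega
  · omega

open scoped ContDiff Topology in
lemma coeff_bound {d : ℕ} (k : Fin d → ℕ) : ∃ g : SchwartzMap (Rd d) ℂ,
    ∀ (x : Rd d) (r : ℝ), 0 < r → r ≤ 1 → ∃ φ : SchwartzMap (Rd d) ℂ,
      HasCompactSupport φ ∧ (∀ y, φ y = g (r⁻¹ • (y - x))) ∧
      (∀ j y, r ≤ dist x y → Dmulti j φ y = 0) ∧
      (∀ j, j ≠ k → Dmulti j φ x = 0) ∧ 1 ≤ ‖Dmulti k φ x‖ := by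
  have hρ : (0:ℝ) < 1 / (d + 1) := by positivity
  choose w hw1 hw2 hw3 using fun i => exists_w (1 / (d + 1)) hρ (k i)
  refine ⟨(prodF_hcs w 0 1 one_pos (by simpa using hw2)).toSchwartzMap (prodF_contDiff w hw1), ?_⟩
  intro x r hr hr1
  let u : Fin d → ℝ → ℂ := fun i t => w i (r⁻¹ * (t - x i))
  have hu : ∀ i, ContDiff ℝ ∞ (u i) := fun i =>
    (hw1 i).comp (contDiff_const.mul (contDiff_id.sub contDiff_const))
  have hu0 : ∀ i t, r / (d + 1) ≤ |t - x i| → u i t = 0 := by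
    intro i t ht
    apply hw2
    rw [abs_mul, abs_of_pos (inv_pos.2 hr), inv_mul_eq_div, le_div_iff₀ hr]
    calc _ = r / ((d:ℝ) + 1) := by ring
      _ ≤ _ := ht
  have hux : ∀ i m, iteratedDeriv m (u i) (x i) = (r⁻¹) ^ m • (if m = k i then 1 else 0 : ℂ) := by
    intro i m
    have e := iteratedDeriv_comp_sub_const m (fun t => w i (r⁻¹ * t)) (x i)
    have e2 := iteratedDeriv_comp_const_smul (n := m)
      ((hw1 i).of_le (by exact_mod_cast le_top)) r⁻¹
    change iteratedDeriv m (fun t => w i (r⁻¹ * (t - x i))) (x i) = _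
    rw [e]
    simp only [e2, sub_self, mul_zero, hw3]
  refine ⟨(prodF_hcs u x r hr hu0).toSchwartzMap (prodF_contDiff u hu),
    prodF_hcs u x r hr hu0, fun y => rfl, ?_, ?_, ?_⟩
  · intro j y hy
    change Dmulti j (prodF u) y = 0
    rw [Dmulti_prodF _ _ hu]
    have : ∃ i, r / (d + 1) < |(y - x) i| := by
      by_contra hc
      push Not at hc
      have := norm_lt_of_coord _ _ hr hc
      rw [dist_comm, dist_eq_norm] at hy
      linarith
    obtain ⟨i, hi⟩ := this
    refine Finset.prod_eq_zero (Finset.mem_univ i) ?_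
    have he : u i =ᶠ[𝓝 (y i)] fun _ => 0 := by
      have ho : IsOpen {t : ℝ | r / (d + 1) < |t - x i|} :=
        isOpen_lt continuous_const (by fun_prop)
      filter_upwards [ho.mem_nhds (by simpa using hi)] with t ht
      exact hu0 i t (le_of_lt ht)
    change iteratedDeriv (j i) (u i) (y i) = 0
    rw [he.iteratedDeriv_eq]
    simp
  · intro j hj
    change Dmulti j (prodF u) x = 0
    rw [Dmulti_prodF _ _ hu]
    obtain ⟨i, hi⟩ := Function.ne_iff.1 hj
    refine Finset.prod_eq_zero (Finset.mem_univ i) ?_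
    simp [hux, hi]
  · change 1 ≤ ‖Dmulti k (prodF u) x‖
    rw [Dmulti_prodF _ _ hu]
    unfold prodF
    rw [norm_prod]
    have hri : 1 ≤ r⁻¹ := (one_le_inv₀ hr).2 hr1
    calc (1:ℝ) = ∏ i : Fin d, 1 := by simp
      _ ≤ _ := by
        apply Finset.prod_le_prod
        · simp
        · intro i _
          change 1 ≤ ‖iteratedDeriv (k i) (u i) (x i)‖
          rw [hux, if_pos rfl, norm_smul, norm_one, mul_one, Real.norm_of_nonneg (by positivity)]
          exact one_le_pow₀ hri

theorem statement8 {d : ℕ} (f : TemperedDist d) (Λ : Set (Rd d)) (K : ℕ)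
    (p : (Fin d → ℕ) → Rd d → ℂ)
    (hsupp : ∀ k x, p k x ≠ 0 → x ∈ Λ)
    (hΛ : PDiscrete Λ)
    (hrep : ∀ φ : SchwartzMap (Rd d) ℂ, HasCompactSupport (⇑φ) →
      f φ = ∑' x : Rd d, ∑ k ∈ mIdx d K, p k x * dkDelta k x φ) :
    ∃ T C R : ℝ, ∀ k ∈ mIdx d K, ∀ x : Rd d, R ≤ ‖x‖ → ‖p k x‖ ≤ C * ‖x‖ ^ T := by
  obtain ⟨c, hc, h, hh, hdisc⟩ := hΛ
  obtain ⟨N, hN⟩ := td_bound f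
  choose g hg using fun k : Fin d → ℕ => coeff_bound k
  choose C hC0 hC using fun k => hN (g k)
  set a := min c 1 with ha
  have ha0 : 0 < a := lt_min hc one_pos
  refine ⟨N + h * N, (∑ k ∈ mIdx d K, C k) * (a⁻¹) ^ N, 1, ?_⟩
  intro k hk x hx
  have hx0 : 0 < ‖x‖ := by linarith
  have hSum : 0 ≤ ∑ k ∈ mIdx d K, C k := Finset.sum_nonneg fun i _ => hC0 i
  by_cases hp : p k x = 0
  · rw [hp, norm_zero]; positivity
  have hxL := hsupp k x hp
  set r := a * ‖x‖ ^ (-h) with hr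
  have hr0 : 0 < r := by positivity
  have hxh : ‖x‖ ^ (-h) ≤ 1 := Real.rpow_le_one_of_one_le_of_nonpos hx (by linarith)
  have hr1 : r ≤ 1 := mul_le_one₀ (min_le_right _ _) (by positivity) hxh
  have hsep : ∀ y ∈ Λ, y ≠ x → r ≤ dist x y := by
    intro y hy hyx
    refine le_trans ?_ (hdisc x hxL y hy hyx.symm)
    split_ifs with h1
    · exact mul_le_mul (min_le_left _ _) hxh (by positivity) hc.le
    · exact mul_le_mul_of_nonneg_right (min_le_left _ _) (by positivity)
  obtain ⟨φ, hφ1, hφ2, hφ3, hφ4, hφ5⟩ := hg k x r hr0 hr1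
  have hval : f φ = p k x * dkDelta k x φ := by
    rw [hrep φ hφ1, tsum_eq_single x, Finset.sum_eq_single k]
    · intro j _ hj
      simp [dkDelta, hφ4 j hj]
    · intro h'; exact absurd hk h'
    · intro y hy
      apply Finset.sum_eq_zero
      intro j _
      by_cases hpj : p j y = 0
      · simp [hpj]
      · simp [dkDelta, hφ3 j y (hsep y (hsupp j y hpj) hy)]
  have hb := hC k x r hx hr0 hr1 φ hφ2
  rw [hval, norm_mul] at hb
  have hd : 1 ≤ ‖dkDelta k x φ‖ := by simpa [dkDelta] using hφ5
  have hpow : ‖x‖ ^ N * (r⁻¹) ^ N = (a⁻¹) ^ N * ‖x‖ ^ ((N:ℝ) + h * N) := by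
    rw [hr, mul_inv, mul_pow, Real.rpow_neg hx0.le, inv_inv, Real.rpow_add hx0,
      Real.rpow_mul hx0.le, Real.rpow_natCast, Real.rpow_natCast]
    ring
  calc ‖p k x‖ ≤ ‖p k x‖ * ‖dkDelta k x φ‖ := le_mul_of_one_le_right (norm_nonneg _) hd
    _ ≤ C k * (‖x‖ ^ N * (r⁻¹) ^ N) := hb
    _ ≤ (∑ k ∈ mIdx d K, C k) * (‖x‖ ^ N * (r⁻¹) ^ N) :=
        mul_le_mul_of_nonneg_right (Finset.single_le_sum (fun i _ => hC0 i) hk) (by positivity)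
    _ = _ := by rw [hpow]; ring
end
end

section
/- Let f be a tempered distribution on ℝ^d whose Fourier transform f̂ is a purely point measure f̂ = Σ_n a_n δ_{γ_n} satisfying |f̂|(B(0,r)) = Σ_{n : |γ_n| < r} |a_n| = O(r^T) as r → ∞ for some T < ∞. Then f is an almost periodic distribution. -/
open MeasureTheory SchwartzMap Metric Set
open scoped Pointwise RealInnerProductSpace ENNReal NNReal

noncomputable section

theorem aux_e2pi_norm {d : ℕ} (x w : Rd d) : ‖e2pi x w‖ = 1 := by
  unfold e2pi
  rw [show ((2 * Real.pi : ℝ) : ℂ) * Complex.I * ((⟪x, w⟫ : ℝ) : ℂ)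
    = ((2 * Real.pi * ⟪x, w⟫ : ℝ) : ℂ) * Complex.I by push_cast; ring]
  exact Complex.norm_exp_ofReal_mul_I _

theorem aux_e2pi_add {d : ℕ} (x y w : Rd d) : e2pi (x + y) w = e2pi x w * e2pi y w := by
  unfold e2pi
  rw [← Complex.exp_add, inner_add_left]
  congr 1
  push_cast
  ring

theorem aux_e2pi_cont {d : ℕ} (w : Rd d) : Continuous fun x => e2pi x w := by
  unfold e2pi
  fun_prop

/-- Joint almost periods of finitely many exponentials are relatively dense. -/
theorem aux_kronecker {d : ℕ} (S : Finset (Rd d)) (δ : ℝ) (hδ : 0 < δ) :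
    RelDense {τ : Rd d | ∀ w ∈ S, ‖e2pi τ w - 1‖ < δ} := by
  let E : Rd d → (S → ℂ) := fun x w => e2pi x w
  have htb : TotallyBounded (range E) := by
    apply TotallyBounded.subset _ (isCompact_closedBall (0 : S → ℂ) 1).totallyBounded
    rintro _ ⟨x, rfl⟩
    rw [mem_closedBall_zero_iff, pi_norm_le_iff_of_nonneg zero_le_one]
    intro w
    exact (aux_e2pi_norm _ _).le
  obtain ⟨t, hts, htf, hcov⟩ := finite_approx_of_totallyBounded htb δ hδ
  have hts' : ∀ y : S → ℂ, ∃ q : Rd d, y ∈ t → E q = y := fun y => by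
    by_cases h : y ∈ t
    · obtain ⟨q, hq⟩ := hts h
      exact ⟨q, fun _ => hq⟩
    · exact ⟨0, fun h' => absurd h' h⟩
  choose p hp using hts'
  obtain ⟨R, hR⟩ := (htf.image (fun y => ‖p y‖)).bddAbove
  refine ⟨max R 1, by positivity, fun x => ?_⟩
  have hx := hcov (mem_range_self x)
  simp only [mem_iUnion, mem_ball] at hx
  obtain ⟨y, hy, hxy⟩ := hx
  refine ⟨x - p y, ?_, ?_⟩
  · intro w hw
    rw [← hp y hy, dist_pi_lt_iff hδ] at hxy
    have h := hxy ⟨w, hw⟩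
    rw [dist_eq_norm] at h
    have e1 : e2pi x w = e2pi (x - p y) w * e2pi (p y) w := by
      rw [← aux_e2pi_add, sub_add_cancel]
    have e2 : E x ⟨w, hw⟩ - E (p y) ⟨w, hw⟩ = (e2pi (x - p y) w - 1) * e2pi (p y) w := by
      change e2pi x w - e2pi (p y) w = _
      rw [e1]; ring
    rwa [e2, norm_mul, aux_e2pi_norm, mul_one] at h
  · rw [dist_eq_norm, sub_sub_cancel]
    exact (hR (mem_image_of_mem _ hy)).trans (le_max_left _ _)

theorem aux_ap {d : ℕ} (c : Rd d → ℂ) (hc : Summable fun w => ‖c w‖) :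
    APFunction fun t => ∑' w, c w * e2pi t w := by
  have hn : ∀ w t, ‖c w * e2pi t w‖ ≤ ‖c w‖ := fun w t => by
    rw [norm_mul, aux_e2pi_norm, mul_one]
  refine ⟨continuous_tsum (fun w => continuous_const.mul (aux_e2pi_cont w)) hc hn, ?_⟩
  intro ε hε
  set A := ∑' w, ‖c w‖ with hA
  have hA0 : 0 ≤ A := tsum_nonneg fun _ => norm_nonneg _
  obtain ⟨S, hS⟩ : ∃ S : Finset (Rd d), A - ε / 4 < ∑ w ∈ S, ‖c w‖ := by
    have := (hc.hasSum.eventually (lt_mem_nhds (show A - ε / 4 < A by linarith)))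
    exact this.exists
  obtain ⟨R, hR, h⟩ := aux_kronecker S (ε / (2 * (A + 1))) (by positivity)
  refine ⟨R, hR, fun x => ?_⟩
  obtain ⟨τ, hτ, hd⟩ := h x
  refine ⟨τ, fun t => ?_, hd⟩
  have hs : ∀ t, Summable fun w => c w * e2pi t w := fun t =>
    Summable.of_norm_bounded hc fun w => hn w t
  rw [← (hs _).tsum_sub (hs _)]
  have h1 : HasSum (fun w => if w ∈ S then ‖c w‖ else 0) (∑ w ∈ S, ‖c w‖) := by
    have := hasSum_sum_of_ne_finset_zero (L := SummationFilter.unconditional _) (f := fun w => if w ∈ S then ‖c w‖ else 0) (s := S)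
      (fun w hw => if_neg hw)
    rwa [Finset.sum_congr rfl (fun w hw => if_pos hw)] at this
  have h2 := (hc.hasSum.mul_left (ε / (2 * (A + 1)))).add ((hc.hasSum.sub h1).mul_left 2)
  have h3 := tsum_of_norm_bounded (f := fun w => c w * e2pi (t + τ) w - c w * e2pi t w) h2 (by
    intro w
    have e : c w * e2pi (t + τ) w - c w * e2pi t w = c w * e2pi t w * (e2pi τ w - 1) := by
      rw [aux_e2pi_add]; ring
    rw [e, norm_mul, norm_mul, aux_e2pi_norm, mul_one]
    by_cases hw : w ∈ S
    · simp only [hw, if_true, sub_self, mul_zero, add_zero]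
      rw [mul_comm]
      exact mul_le_mul_of_nonneg_right (hτ w hw).le (norm_nonneg _)
    · simp only [hw, if_false, sub_zero]
      have : ‖e2pi τ w - 1‖ ≤ 2 := by
        refine (norm_sub_le _ _).trans ?_
        rw [aux_e2pi_norm, norm_one]; norm_num
      have h4 := mul_le_mul_of_nonneg_left this (norm_nonneg (c w))
      have h5 : 0 ≤ ε / (2 * (A + 1)) * ‖c w‖ := by positivity
      linarith)
  refine h3.trans_lt ?_
  rw [← hA]
  have h6 : ε / (2 * (A + 1)) * A ≤ ε / 2 := by
    rw [div_mul_eq_mul_div, div_le_div_iff₀ (by positivity) (by norm_num)]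
    nlinarith
  linarith

open FourierTransform in
theorem aux_shift {d : ℕ} (φ φ' : SchwartzMap (Rd d) ℂ) (t : Rd d)
    (h : ∀ y, φ y = φ' (y - t)) (w : Rd d) :
    (𝓕⁻ φ) w = e2pi t w * (𝓕⁻ φ') w := by
  rw [SchwartzMap.fourierInv_coe, SchwartzMap.fourierInv_coe, Real.fourierInv_eq',
    Real.fourierInv_eq', ← integral_add_right_eq_self _ t, ← integral_const_mul]
  congr 1
  ext y
  rw [h, add_sub_cancel_right, smul_eq_mul, smul_eq_mul, ← mul_assoc]
  congr 1
  unfold e2pi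
  rw [← Complex.exp_add, inner_add_left]
  congr 1
  push_cast
  ring

/-- (Proposition 2.) If the Fourier transform of a tempered
distribution `f` on `ℝ^d` is a pure point measure `f̂ = Σ_n a_n δ_{γ_n}` with
`|f̂|(B(0,r)) = O(r^T)` for some `T < ∞`, then `f` is an almost periodic
distribution. -/
theorem statement9 {d : ℕ} (f : TemperedDist d) (b : Rd d → ℂ)
    (hrepF : RepMeasure b (fourierTD f))
    (hvar : ∃ T C r₀ : ℝ, ∀ r ≥ r₀, ballVar b r ≤ ENNReal.ofReal (C * r ^ T)) :
    APDistribution f := by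
  obtain ⟨-, hsum, hrep⟩ := hrepF
  intro ψ _ _ Φ hΦ
  have key : ∀ t, f (Φ t) = ∑' w, (b w * (FourierTransformInv.fourierInv (Φ 0)) w) * e2pi t w := by
    intro t
    have h1 := hrep (FourierTransformInv.fourierInv (Φ t))
    have h2 : fourierTD f (FourierTransformInv.fourierInv (Φ t)) = f (Φ t) := by
      unfold fourierTD
      rw [ContinuousLinearMap.comp_apply, SchwartzMap.fourierTransformCLM_apply,
        FourierTransform.fourier_fourierInv_eq]
    rw [← h2, h1]
    refine tsum_congr fun w => ?_
    rw [aux_shift (Φ t) (Φ 0) t (fun y => by rw [hΦ, hΦ]; congr 1; abel)]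
    ring
  simp_rw [key]
  apply aux_ap
  simpa only [norm_mul] using hsum (FourierTransformInv.fourierInv (Φ 0))
end
end

section
/- Let f = Σ_{λ∈Λ} Σ_{‖k‖≤K} p_k(λ) D^k δ_λ be a tempered distribution on ℝ^d with locally finite support Λ and locally finite spectrum Γ = supp f̂, and suppose that Σ_{|λ|≤r} Σ_{‖k‖≤K} |p_k(λ)| = O(r^{d+M}) as r → ∞ for some integer M ≥ 0. Then f̂ has the form f̂ = Σ_{γ∈Γ} Σ_{‖m‖≤M} q_m(γ) D^m δ_γ with m ∈ (ℕ∪{0})^d, and for ‖m‖ = M one has q_m(γ) = O(|γ|^K) as γ → ∞. -/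
open MeasureTheory SchwartzMap Metric Set
open scoped Pointwise RealInnerProductSpace ENNReal NNReal

noncomputable section

section part1
open scoped ContDiff

def wD {d : ℕ} (l : List (Fin d)) (φ : Rd d → ℂ) : Rd d → ℂ := l.foldr (fun i g => pderiv' i g) φ

lemma pderiv'_smooth {d : ℕ} (i : Fin d) {φ : Rd d → ℂ} (h : ContDiff ℝ ∞ φ) :
    ContDiff ℝ ∞ (pderiv' i φ) := by
  unfold pderiv'
  exact (h.fderiv_right (m := ∞) (by simp)).clm_apply contDiff_const

lemma wD_smooth {d : ℕ} (l : List (Fin d)) {φ : Rd d → ℂ} (h : ContDiff ℝ ∞ φ) :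
    ContDiff ℝ ∞ (wD l φ) := by
  induction l with
  | nil => exact h
  | cons i l ih => exact pderiv'_smooth i ih

lemma pderiv'_comm {d : ℕ} (i j : Fin d) {φ : Rd d → ℂ} (h : ContDiff ℝ ∞ φ) :
    pderiv' i (pderiv' j φ) = pderiv' j (pderiv' i φ) := by
  have key : ∀ i j : Fin d, ∀ x, pderiv' i (pderiv' j φ) x =
      fderiv ℝ (fderiv ℝ φ) x (EuclideanSpace.single i 1) (EuclideanSpace.single j 1) := by
    intro i j x
    unfold pderiv'
    have h1 : DifferentiableAt ℝ (fderiv ℝ φ) x :=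
      ((h.fderiv_right (m := ∞) (by simp)).differentiable (by simp)) x
    rw [fderiv_clm_apply h1 (by fun_prop)]
    simp
  ext x
  rw [key, key]
  have : IsSymmSndFDerivAt ℝ φ x := h.contDiffAt.isSymmSndFDerivAt (by simpa using (WithTop.coe_le_coe.2 le_top : ((2:ℕ∞) : WithTop ℕ∞) ≤ ((⊤ : ℕ∞) : WithTop ℕ∞)))
  exact this _ _

lemma wD_perm {d : ℕ} {l l' : List (Fin d)} (hl : l.Perm l') {φ : Rd d → ℂ} (h : ContDiff ℝ ∞ φ) :
    wD l φ = wD l' φ := by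
  induction hl with
  | nil => rfl
  | cons x _ ih => simp only [wD, List.foldr_cons] at *; rw [ih]
  | swap x y l => exact pderiv'_comm _ _ (wD_smooth l h)
  | trans _ _ ih1 ih2 => rw [ih1, ih2]

lemma wD_append {d : ℕ} (l l' : List (Fin d)) (φ : Rd d → ℂ) :
    wD (l ++ l') φ = wD l (wD l' φ) := by
  simp [wD]

lemma wD_replicate {d : ℕ} (n : ℕ) (i : Fin d) (φ : Rd d → ℂ) :
    wD (List.replicate n i) φ = (pderiv' i)^[n] φ := by
  induction n with
  | zero => rfl
  | succ n ih => rw [Function.iterate_succ_apply', ← ih]; rfl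

def kList {d : ℕ} (k : Fin d → ℕ) : List (Fin d) :=
  (List.finRange d).flatMap fun i => List.replicate (k i) i

lemma Dmulti_eq_wD {d : ℕ} (k : Fin d → ℕ) (φ : Rd d → ℂ) : Dmulti k φ = wD (kList k) φ := by
  unfold Dmulti kList
  induction List.finRange d with
  | nil => rfl
  | cons i l ih => simp [wD_append, wD_replicate, ih]

lemma length_kList {d : ℕ} (k : Fin d → ℕ) : (kList k).length = ∑ i, k i := by
  simp [kList, List.length_flatMap, Fin.sum_univ_def]

lemma wD_eq_iter {d : ℕ} (l : List (Fin d)) {φ : Rd d → ℂ} (h : ContDiff ℝ ∞ φ) (x : Rd d) :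
    wD l φ x = iteratedFDeriv ℝ l.length φ x (fun a => EuclideanSpace.single (l.get a) 1) := by
  induction l generalizing x with
  | nil => simp [wD]
  | cons i l ih =>
    have : wD (i :: l) φ x = pderiv' i (wD l φ) x := rfl
    rw [this]
    have h2 : wD l φ = fun x => iteratedFDeriv ℝ l.length φ x
      (fun a => EuclideanSpace.single (l.get a) 1) := funext ih
    rw [h2]
    unfold pderiv'
    simp only [List.length_cons]
    rw [iteratedFDeriv_succ_apply_left]
    have h1 : DifferentiableAt ℝ (iteratedFDeriv ℝ l.length φ) x :=
      (h.differentiable_iteratedFDeriv (by exact_mod_cast ENat.natCast_lt_top _)) x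
    rw [fderiv_continuousMultilinear_apply_const_apply h1]
    rfl

lemma Dmulti_vec {d : ℕ} (k : Fin d → ℕ) : ∃ v : Fin (∑ i, k i) → Rd d, (∀ a, ‖v a‖ ≤ 1) ∧
    ∀ φ : Rd d → ℂ, ContDiff ℝ ∞ φ → ∀ x, Dmulti k φ x = iteratedFDeriv ℝ (∑ i, k i) φ x v := by
  rw [← length_kList k]
  exact ⟨fun a => EuclideanSpace.single ((kList k).get a) 1, fun a => by simp,
    fun φ h x => by rw [Dmulti_eq_wD, wD_eq_iter _ h]⟩

lemma Dmulti_norm_le {d : ℕ} (k : Fin d → ℕ) {φ : Rd d → ℂ} (h : ContDiff ℝ ∞ φ) (x : Rd d) :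
    ‖Dmulti k φ x‖ ≤ ‖iteratedFDeriv ℝ (∑ i, k i) φ x‖ := by
  obtain ⟨v, hv, H⟩ := Dmulti_vec k
  rw [H φ h]
  refine (ContinuousMultilinearMap.le_opNorm _ _).trans ?_
  refine mul_le_of_le_one_right (norm_nonneg _) ?_
  exact Finset.prod_le_one (fun _ _ => norm_nonneg _) (fun a _ => hv a)

lemma jet_zero {d : ℕ} {φ : Rd d → ℂ} (h : ContDiff ℝ ∞ φ) (x : Rd d) (j : ℕ)
    (H : ∀ k : Fin d → ℕ, ∑ i, k i = j → Dmulti k φ x = 0) : iteratedFDeriv ℝ j φ x = 0 := by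
  apply ContinuousMultilinearMap.toMultilinearMap_injective
  refine Module.Basis.ext_multilinear (fun _ => (EuclideanSpace.basisFun (Fin d) ℝ).toBasis) ?_
  intro w
  have hl : (List.ofFn w).length = j := by simp
  have h1 : wD (List.ofFn w) φ x = 0 := by
    set k : Fin d → ℕ := fun i => (List.ofFn w).count i
    have hp : (List.ofFn w).Perm (kList k) := by
      rw [List.perm_iff_count]
      intro a
      simp only [kList, List.count_flatMap]
      rw [← Fin.sum_univ_def]
      simp [List.count_replicate, k]
    rw [wD_perm hp h, ← Dmulti_eq_wD]
    apply H
    rw [← length_kList, ← hp.length_eq, hl]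
  rw [wD_eq_iter _ h] at h1
  have h3 : ∀ (n : ℕ) (hn : n = j) (v : Fin n → Rd d), iteratedFDeriv ℝ n φ x v =
    iteratedFDeriv ℝ j φ x (fun a => v (Fin.cast hn.symm a)) := by
    rintro n rfl v; rfl
  rw [h3 _ hl] at h1
  simpa using h1

def monoS {d : ℕ} (u : Fin d → ℝ → ℂ) : Rd d → ℂ := fun x => ∏ j, u j (x j)

lemma pderiv'_monoS {d : ℕ} (i : Fin d) (u : Fin d → ℝ → ℂ) (hu : ∀ j, ContDiff ℝ ∞ (u j)) :
    pderiv' i (monoS u) = monoS (Function.update u i (deriv (u i))) := by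
  ext x
  unfold pderiv' monoS
  have hd : ∀ j, HasFDerivAt (fun x : Rd d => u j (x j))
      ((ContinuousLinearMap.smulRight (1 : ℝ →L[ℝ] ℝ) (deriv (u j) (x j))).comp
        (EuclideanSpace.proj j : Rd d →L[ℝ] ℝ)) x := by
    intro j
    have h1 : HasFDerivAt (u j) _ (x j) := (((hu j).differentiable (by simp)) (x j)).hasDerivAt.hasFDerivAt
    exact h1.comp x (EuclideanSpace.proj j : Rd d →L[ℝ] ℝ).hasFDerivAt
  have h2 := HasFDerivAt.finsetProd (u := Finset.univ) (fun j _ => hd j)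
  rw [h2.fderiv]
  simp only [sum_apply, smul_apply,
    ContinuousLinearMap.comp_apply, ContinuousLinearMap.smulRight_apply]
  rw [Finset.sum_eq_single i]
  · rw [← Finset.mul_prod_erase Finset.univ _ (Finset.mem_univ i)]
    simp only [Function.update_self]
    have : ∏ j ∈ Finset.univ.erase i, Function.update u i (deriv (u i)) j (x j) =
        ∏ j ∈ Finset.univ.erase i, u j (x j) := by
      apply Finset.prod_congr rfl
      intro j hj
      rw [Function.update_of_ne (Finset.ne_of_mem_erase hj)]
    rw [this]
    simp [mul_comm]
  · intro j _ hj
    simp [hj]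
  · simp

lemma deriv_smooth {u : ℝ → ℂ} (h : ContDiff ℝ ∞ u) : ContDiff ℝ ∞ (deriv u) := by
  exact (contDiff_infty_iff_deriv.1 h).2

lemma iter_deriv_smooth {u : ℝ → ℂ} (h : ContDiff ℝ ∞ u) (n : ℕ) : ContDiff ℝ ∞ (deriv^[n] u) := by
  induction n with
  | zero => exact h
  | succ n ih => rw [Function.iterate_succ_apply']; exact deriv_smooth ih

lemma wD_monoS {d : ℕ} (l : List (Fin d)) (u : Fin d → ℝ → ℂ) (hu : ∀ j, ContDiff ℝ ∞ (u j)) :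
    wD l (monoS u) = monoS (fun j => deriv^[l.count j] (u j)) := by
  induction l with
  | nil => simp [wD]
  | cons i l ih =>
    have : wD (i :: l) (monoS u) = pderiv' i (wD l (monoS u)) := rfl
    rw [this, ih, pderiv'_monoS _ _ (fun j => iter_deriv_smooth (hu j) _)]
    congr 1
    ext j : 1
    by_cases hj : j = i
    · subst hj
      simp [Function.iterate_succ_apply']
    · rw [Function.update_of_ne hj, List.count_cons_of_ne (fun h => hj h.symm)]

lemma count_kList {d : ℕ} (k : Fin d → ℕ) (a : Fin d) : (kList k).count a = k a := by
  simp only [kList, List.count_flatMap]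
  rw [← Fin.sum_univ_def]
  simp [List.count_replicate]

def tmon {d : ℕ} (m : Fin d → ℕ) : Rd d → ℂ :=
  monoS (fun i t => ((t : ℂ) ^ (m i) / ((m i).factorial : ℂ)))

lemma iter_deriv_tpow (n m : ℕ) : deriv^[n] (fun t : ℝ => ((t : ℂ) ^ m / (m.factorial : ℂ))) 0 =
    if n = m then 1 else 0 := by
  have key : ∀ n m : ℕ, deriv^[n] (fun t : ℝ => ((t : ℂ) ^ m / (m.factorial : ℂ))) =
     if n ≤ m then (fun t : ℝ => ((t : ℂ) ^ (m-n) / ((m-n).factorial : ℂ))) else 0 := by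
    intro n
    induction n with
    | zero => intro m; simp
    | succ n ih =>
      intro m
      rw [Function.iterate_succ_apply]
      cases m with
      | zero =>
        simp
        have : (fun _ : ℝ => (0:ℂ)) = 0 := rfl
        rw [this]
        clear ih
        induction n with
        | zero => rfl
        | succ n ih => rw [Function.iterate_succ_apply]; simpa using ih
      | succ m =>
        have : deriv (fun t : ℝ => ((t : ℂ) ^ (m+1) / ((m+1).factorial : ℂ))) =
            fun t : ℝ => ((t : ℂ) ^ m / (m.factorial : ℂ)) := by
          ext t
          have h1 : HasDerivAt (fun t : ℝ => (t : ℂ)) 1 t := Complex.ofRealCLM.hasDerivAt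
          have h2 := (h1.pow (m+1)).div_const ((m+1).factorial : ℂ)
          refine h2.deriv.trans ?_
          have : (m.factorial : ℂ) ≠ 0 := by exact_mod_cast m.factorial_ne_zero
          have h3 : ((m:ℂ)+1) ≠ 0 := by exact_mod_cast m.succ_ne_zero
          rw [Nat.factorial_succ]
          push_cast
          field_simp
        rw [this, ih]
        simp
  rw [key]
  by_cases h : n ≤ m
  · simp only [h, if_true]
    by_cases h' : n = m
    · simp [h']
    · have : m - n ≠ 0 := by omega
      simp [h', this]
  · have : n ≠ m := by omega
    simp [h, this]

lemma upow_smooth (m : ℕ) : ContDiff ℝ ∞ (fun t : ℝ => ((t : ℂ) ^ m / (m.factorial : ℂ))) := by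
  have : ContDiff ℝ ∞ (fun t : ℝ => (t : ℂ)) := Complex.ofRealCLM.contDiff
  exact (this.pow m).div_const _

lemma tmon_smooth {d : ℕ} (m : Fin d → ℕ) : ContDiff ℝ ∞ (tmon m) := by
  unfold tmon monoS
  apply contDiff_prod
  intro i _
  exact (upow_smooth (m i)).comp (EuclideanSpace.proj i : Rd d →L[ℝ] ℝ).contDiff

lemma Dmulti_tmon {d : ℕ} (k m : Fin d → ℕ) : Dmulti k (tmon m) 0 = if k = m then 1 else 0 := by
  rw [Dmulti_eq_wD, tmon, wD_monoS _ _ (fun j => upow_smooth (m j))]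
  simp only [monoS, count_kList, PiLp.zero_apply, iter_deriv_tpow]
  by_cases h : k = m
  · subst h; simp
  · obtain ⟨i, hi⟩ := Function.ne_iff.1 h
    simp only [h, if_false]
    exact Finset.prod_eq_zero (Finset.mem_univ i) (by simp [hi])

end part1

section part2
open scoped ContDiff

lemma leib {d : ℕ} {a b : Rd d → ℂ} (ha : ContDiff ℝ ∞ a) (hb : ContDiff ℝ ∞ b) (y : Rd d)
    {N : ℕ} {ε A B : ℝ} (hε : 0 ≤ ε) 
    (h1 : ∀ j ≤ N, ε ^ j * ‖iteratedFDeriv ℝ j a y‖ ≤ A)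
    (h2 : ∀ j ≤ N, ε ^ j * ‖iteratedFDeriv ℝ j b y‖ ≤ B) :
    ∀ j ≤ N, ε ^ j * ‖iteratedFDeriv ℝ j (fun y => a y * b y) y‖ ≤ 2 ^ N * A * B := by
  intro j hj
  have hA : 0 ≤ A := le_trans (by positivity) (h1 0 (by omega))
  have hB : 0 ≤ B := le_trans (by positivity) (h2 0 (by omega))
  have h := norm_iteratedFDeriv_mul_le ha hb y (n := j) (by exact_mod_cast le_top)
  calc _ ≤ ε ^ j * ∑ i ∈ Finset.range (j + 1),
      (j.choose i : ℝ) * ‖iteratedFDeriv ℝ i a y‖ * ‖iteratedFDeriv ℝ (j - i) b y‖ := by gcongr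
    _ = ∑ i ∈ Finset.range (j + 1), (j.choose i : ℝ) * ((ε ^ i * ‖iteratedFDeriv ℝ i a y‖) *
        (ε ^ (j - i) * ‖iteratedFDeriv ℝ (j - i) b y‖)) := by
        rw [Finset.mul_sum]
        apply Finset.sum_congr rfl
        intro i hi
        have : ε ^ j = ε ^ i * ε ^ (j - i) := by
          rw [← pow_add]; congr 1; have := Finset.mem_range.1 hi; omega
        rw [this]; ring
    _ ≤ ∑ i ∈ Finset.range (j + 1), (j.choose i : ℝ) * (A * B) := by
        apply Finset.sum_le_sum
        intro i hi
        have := Finset.mem_range.1 hi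
        gcongr
        · exact h1 i (by omega)
        · exact h2 _ (by omega)
    _ = 2 ^ j * (A * B) := by
        rw [← Finset.sum_mul]; congr 1
        exact_mod_cast Nat.sum_range_choose j
    _ ≤ 2 ^ N * (A * B) := by gcongr; norm_num
    _ = _ := by ring

lemma flat_aux {d : ℕ} {φ : Rd d → ℂ} (h : ContDiff ℝ ∞ φ) (γ : Rd d) {L : ℕ} {A : ℝ}
    (hA : ∀ j ≤ L, ∀ y, ‖iteratedFDeriv ℝ j φ y‖ ≤ A)
    (h0 : ∀ j < L, iteratedFDeriv ℝ j φ γ = 0) :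
    ∀ i ≤ L, ∀ y, ‖iteratedFDeriv ℝ (L - i) φ y‖ ≤ A * ‖y - γ‖ ^ i := by
  intro i
  induction i with
  | zero => intro _ y; simpa using hA L le_rfl y
  | succ i ih =>
    intro hi y
    have hL : L - i = (L - (i+1)) + 1 := by omega
    have h1 := ih (by omega)
    rw [hL] at h1
    have key := (convex_closedBall γ ‖y - γ‖).norm_image_sub_le_of_norm_fderiv_le (𝕜 := ℝ)
      (f := iteratedFDeriv ℝ (L - (i+1)) φ) (C := A * ‖y - γ‖ ^ i) (x := γ) (y := y)
      (fun z _ => (h.differentiable_iteratedFDeriv (m := L - (i+1)) (WithTop.coe_lt_coe.2 (ENat.natCast_lt_top _))) z)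
      (fun z hz => by
        rw [norm_fderiv_iteratedFDeriv]
        refine (h1 z).trans ?_
        have hA0 : 0 ≤ A := (norm_nonneg _).trans (hA 0 (by omega) y)
        gcongr
        simpa [dist_eq_norm] using hz)
      (by simp) (by simp [dist_eq_norm])
    rw [h0 _ (by omega), sub_zero] at key
    rw [pow_succ, ← mul_assoc]
    exact key

lemma flat {d : ℕ} {φ : Rd d → ℂ} (h : ContDiff ℝ ∞ φ) (γ : Rd d) {L N : ℕ} {A : ℝ}
    (hA : ∀ j ≤ max L N, ∀ y, ‖iteratedFDeriv ℝ j φ y‖ ≤ A)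
    (h0 : ∀ j < L, iteratedFDeriv ℝ j φ γ = 0) {ε : ℝ} (hε : 0 ≤ ε) (hε1 : ε ≤ 1) {y : Rd d}
    (hy : ‖y - γ‖ ≤ ε) :
    ∀ j ≤ N, ε ^ j * ‖iteratedFDeriv ℝ j φ y‖ ≤ A * ε ^ L := by
  intro j hj
  have hA0 : 0 ≤ A := (norm_nonneg _).trans (hA 0 (by omega) y)
  by_cases hjL : j ≤ L
  · have := flat_aux h γ (fun j hj => hA j (by omega)) h0 (L - j) (by omega) y
    have e : L - (L - j) = j := by omega
    rw [e] at this
    calc _ ≤ ε ^ j * (A * ε ^ (L - j)) := by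
          gcongr; exact this.trans (by gcongr)
      _ = A * (ε ^ j * ε ^ (L - j)) := by ring
      _ = _ := by rw [← pow_add]; congr 2; omega
  · calc _ ≤ ε ^ L * A := by
          gcongr ?_ * ?_
          · exact pow_le_pow_of_le_one hε hε1 (by omega)
          · exact hA j (by omega) y
      _ = _ := mul_comm _ _

/-- standard cutoff -/
def chiB (d : ℕ) : ContDiffBump (0 : Rd d) := ⟨1/2, 1, by norm_num, by norm_num⟩

def chi0 (d : ℕ) : Rd d → ℂ := fun x => ((chiB d x : ℝ) : ℂ)

lemma chi0_smooth (d : ℕ) : ContDiff ℝ ∞ (chi0 d) :=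
  Complex.ofRealCLM.contDiff.comp (chiB d).contDiff

lemma chi0_compact (d : ℕ) : HasCompactSupport (chi0 d) :=
  (chiB d).hasCompactSupport.comp_left (g := fun t : ℝ => (t : ℂ)) (by simp)

def chiS (d : ℕ) : SchwartzMap (Rd d) ℂ := (chi0_compact d).toSchwartzMap (chi0_smooth d)

lemma chi0_one {d : ℕ} {x : Rd d} (h : ‖x‖ ≤ 1/2) : chi0 d x = 1 := by
  unfold chi0
  rw [(chiB d).one_of_mem_closedBall (by simpa [chiB] using h)]; simp

lemma chi0_zero {d : ℕ} {x : Rd d} (h : 1 ≤ ‖x‖) : chi0 d x = 0 := by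
  unfold chi0
  rw [(chiB d).zero_of_le_dist (by simpa [chiB] using h)]; simp

def cut {d : ℕ} (γ : Rd d) (ε : ℝ) : Rd d → ℂ := fun y => chi0 d (ε⁻¹ • (y - γ))

lemma cut_smooth {d : ℕ} (γ : Rd d) (ε : ℝ) : ContDiff ℝ ∞ (cut γ ε) :=
  (chi0_smooth d).comp (by fun_prop)

lemma cut_one {d : ℕ} {γ : Rd d} {ε : ℝ} (hε : 0 < ε) {y : Rd d} (h : ‖y - γ‖ ≤ ε / 2) :
    cut γ ε y = 1 := by
  apply chi0_one
  rw [norm_smul, norm_inv, Real.norm_of_nonneg hε.le, inv_mul_le_iff₀ hε]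
  linarith

lemma cut_zero {d : ℕ} {γ : Rd d} {ε : ℝ} (hε : 0 < ε) {y : Rd d} (h : ε ≤ ‖y - γ‖) :
    cut γ ε y = 0 := by
  apply chi0_zero
  rw [norm_smul, norm_inv, Real.norm_of_nonneg hε.le, le_inv_mul_iff₀ hε]
  linarith

lemma cut_tsupport {d : ℕ} {γ : Rd d} {ε : ℝ} (hε : 0 < ε) : tsupport (cut γ ε) ⊆ closedBall γ ε := by
  apply closure_minimal _ isClosed_closedBall
  intro y hy
  by_contra h
  apply hy
  apply cut_zero hε
  rw [mem_closedBall, dist_eq_norm] at h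
  linarith

lemma cut_compact {d : ℕ} (γ : Rd d) {ε : ℝ} (hε : 0 < ε) : HasCompactSupport (cut γ ε) :=
  (isCompact_closedBall γ ε).of_isClosed_subset (isClosed_tsupport _) (cut_tsupport hε)

lemma schw_bound {d : ℕ} (φ : SchwartzMap (Rd d) ℂ) (N : ℕ) :
    ∃ A : ℝ, 0 < A ∧ ∀ j ≤ N, ∀ y, ‖iteratedFDeriv ℝ j φ y‖ ≤ A := by
  refine ⟨1 + ∑ j ∈ Finset.range (N+1), SchwartzMap.seminorm ℝ 0 j φ, ?_, ?_⟩
  · have := Finset.sum_nonneg (s := Finset.range (N+1)) (f := fun j => SchwartzMap.seminorm ℝ 0 j φ)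
      (fun j _ => apply_nonneg _ _)
    linarith
  · intro j hj y
    have h1 := SchwartzMap.norm_iteratedFDeriv_le_seminorm ℝ φ j y
    have h2 := Finset.single_le_sum (s := Finset.range (N+1)) (f := fun j => SchwartzMap.seminorm ℝ 0 j φ)
      (fun j _ => apply_nonneg _ _) (Finset.mem_range.2 (by omega : j < N + 1))
    linarith

lemma cut_bound (d N : ℕ) : ∃ B : ℝ, 0 < B ∧ ∀ (γ : Rd d) (ε : ℝ), 0 < ε → ∀ j ≤ N, ∀ y,
    ε ^ j * ‖iteratedFDeriv ℝ j (cut γ ε) y‖ ≤ B := by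
  obtain ⟨B, hB, H⟩ := schw_bound (chiS d) N
  refine ⟨B, hB, fun γ ε hε j hj y => ?_⟩
  have e1 : iteratedFDeriv ℝ j (cut γ ε) y = ε⁻¹ ^ j • iteratedFDeriv ℝ j (chi0 d) (ε⁻¹ • (y - γ)) := by
    have h1 : cut γ ε = fun z => (fun w => chi0 d (ε⁻¹ • w)) (z - γ) := rfl
    rw [h1, iteratedFDeriv_comp_sub (f := fun w => chi0 d (ε⁻¹ • w)) j γ y, iteratedFDeriv_comp_const_smul]
    exact (chi0_smooth d).of_le (by exact_mod_cast le_top)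
  rw [e1, norm_smul, norm_pow, norm_inv, Real.norm_of_nonneg hε.le, ← mul_assoc, ← mul_pow,
    mul_inv_cancel₀ hε.ne', one_pow, one_mul]
  exact H j hj _

/-- Multiply a Schwartz function by a cutoff. -/
def mcut {d : ℕ} (φ : SchwartzMap (Rd d) ℂ) (γ : Rd d) (ε : ℝ) : SchwartzMap (Rd d) ℂ :=
  open Classical in
  if hε : 0 < ε then
  (HasCompactSupport.mul_left (f := φ) (cut_compact γ hε)).toSchwartzMap
    ((φ.smooth ⊤).mul (cut_smooth γ ε)) else 0

lemma mcut_coe {d : ℕ} (φ : SchwartzMap (Rd d) ℂ) (γ : Rd d) {ε : ℝ} (hε : 0 < ε) :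
    ⇑(mcut φ γ ε) = fun y => φ y * cut γ ε y := by
  unfold mcut; rw [dif_pos hε]; rfl

lemma mcut_tsupport {d : ℕ} (φ : SchwartzMap (Rd d) ℂ) (γ : Rd d) {ε : ℝ} (hε : 0 < ε) :
    tsupport (mcut φ γ ε) ⊆ closedBall γ ε := by
  rw [mcut_coe _ _ hε]
  exact (tsupport_mul_subset_right).trans (cut_tsupport hε)

lemma mcut_compact {d : ℕ} (φ : SchwartzMap (Rd d) ℂ) (γ : Rd d) {ε : ℝ} (hε : 0 < ε) :
    HasCompactSupport (mcut φ γ ε) :=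
  (isCompact_closedBall γ ε).of_isClosed_subset (isClosed_tsupport _) (mcut_tsupport φ γ hε)

/-- compact truncations converge -/
lemma mcut_tendsto {d : ℕ} (φ : SchwartzMap (Rd d) ℂ) :
    Filter.Tendsto (fun n : ℕ => mcut φ 0 ((n : ℝ) + 1)) Filter.atTop (nhds φ) := by
  rw [(schwartz_withSeminorms ℝ (Rd d) ℂ).tendsto_nhds]
  rintro ⟨k, n⟩ ε hε
  obtain ⟨B, hB, H⟩ := cut_bound d n
  set S : ℝ := ∑ j ∈ Finset.range (n+1), SchwartzMap.seminorm ℝ (k+1) j φ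
  have hS : 0 ≤ S := Finset.sum_nonneg (fun j _ => apply_nonneg _ _)
  have main : ∀ m : ℕ, SchwartzMap.seminorm ℝ k n (mcut φ 0 ((m : ℝ) + 1) - φ) ≤
      (2 ^ n * (B + 1) * S * 2) / ((m : ℝ) + 1) := by
    intro m
    have hR : (0:ℝ) < (m : ℝ) + 1 := by positivity
    set R : ℝ := (m : ℝ) + 1
    apply SchwartzMap.seminorm_le_bound _ _ _ _ (by positivity)
    intro x
    have e : ⇑(mcut φ 0 R - φ) = fun y => φ y * (cut 0 R y - 1) := by
      ext y; simp [mcut_coe _ _ hR]; ring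
    rw [e]
    by_cases hx : ‖x‖ < R / 2
    · have : (fun y => φ y * (cut 0 R y - 1)) =ᶠ[nhds x] (fun _ => 0) := by
        filter_upwards [(Metric.isOpen_ball (x := (0 : Rd d)) (ε := R/2)).mem_nhds (by simpa using hx)] with y hy
        rw [cut_one hR (by simpa using (mem_ball_zero_iff.1 hy).le)]; simp
      rw [(this.iteratedFDeriv ℝ n).eq_of_nhds]
      have : (iteratedFDeriv ℝ n (fun _ : Rd d => (0:ℂ)) x) = 0 := by
        simp [iteratedFDeriv_fun_zero]
      rw [this]; simp; positivity
    · have hx' : R / 2 ≤ ‖x‖ := not_lt.1 hx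
      have hx0 : 0 < ‖x‖ := by linarith
      have h1 := leib (φ.smooth ⊤) ((cut_smooth (0 : Rd d) R).sub contDiff_const) (b := fun y => cut 0 R y - 1) x (N := n)
        (ε := 1) (A := S / ‖x‖ ^ (k+1)) (B := B + 1) (by norm_num)
        (fun j hj => by
          rw [one_pow, one_mul, le_div_iff₀ (by positivity), mul_comm]
          refine (SchwartzMap.le_seminorm ℝ (k+1) j φ x).trans ?_
          exact Finset.single_le_sum (f := fun j => SchwartzMap.seminorm ℝ (k+1) j φ)
            (fun j _ => apply_nonneg _ _) (Finset.mem_range.2 (by omega)))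
        (fun j hj => by
          rw [one_pow, one_mul]
          have h2 := H 0 R hR j hj x
          have h3 : ‖iteratedFDeriv ℝ j (cut 0 R) x‖ ≤ B := by
            refine le_trans ?_ h2
            apply le_mul_of_one_le_left (norm_nonneg _)
            apply one_le_pow₀
            simp [R]
          have h4 : iteratedFDeriv ℝ j (fun y => cut (0 : Rd d) R y - 1) x =
            iteratedFDeriv ℝ j (cut (0 : Rd d) R) x - iteratedFDeriv ℝ j (fun _ => (1:ℂ)) x := by
            exact iteratedFDeriv_sub_apply ((cut_smooth (0 : Rd d) R).of_le (by exact_mod_cast le_top)).contDiffAt contDiff_const.contDiffAt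
          rw [h4]
          refine (norm_sub_le _ _).trans (add_le_add h3 ?_)
          cases j with
          | zero => simp
          | succ j => simp [iteratedFDeriv_succ_const])
        n le_rfl
      rw [one_pow, one_mul] at h1
      calc _ ≤ ‖x‖ ^ k * (2 ^ n * (S / ‖x‖ ^ (k + 1)) * (B + 1)) := by gcongr
        _ = 2 ^ n * (B + 1) * S / ‖x‖ := by field_simp; ring
        _ ≤ 2 ^ n * (B + 1) * S / (R / 2) := by gcongr
        _ = _ := by field_simp
  have hlim : Filter.Tendsto (fun m : ℕ => (2 ^ n * (B + 1) * S * 2) / ((m : ℝ) + 1)) Filter.atTop (nhds 0) :=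
    tendsto_const_nhds.div_atTop (Filter.tendsto_atTop_add_const_right _ _ tendsto_natCast_atTop_atTop)
  filter_upwards [hlim.eventually_lt_const hε] with m hm
  exact (main m).trans_lt hm

end part2

section part3
open scoped ContDiff

lemma layer {n : ℕ} {A s t : ℝ} (hA : 0 ≤ A) (ht : t ≤ A) (hs : 0 ≤ s) (hst : s ^ (n+1) * t ≤ A) :
    ENNReal.ofReal t ≤ ∑' j : ℕ, if s ≤ 2 ^ j then
      ENNReal.ofReal (A * 2 ^ (n+1) * (1/2) ^ (j * (n+1))) else 0 := by
  have hex : ∃ j : ℕ, s ≤ 2 ^ j := by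
    obtain ⟨j, hj⟩ := pow_unbounded_of_one_lt s (by norm_num : (1:ℝ) < 2)
    exact ⟨j, hj.le⟩
  classical
  set j := Nat.find hex
  have hj : s ≤ 2 ^ j := Nat.find_spec hex
  refine le_trans ?_ (ENNReal.le_tsum j)
  rw [if_pos hj]
  apply ENNReal.ofReal_le_ofReal
  rcases Nat.eq_zero_or_pos j with h0 | h0
  · rw [h0]; simp
    have : (1:ℝ) ≤ 2 ^ (n+1) := one_le_pow₀ (by norm_num)
    nlinarith
  · have hlt : 2 ^ (j - 1) < s := not_le.1 (Nat.find_min hex (show j - 1 < j by omega))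
    have h1 : (2 ^ (j-1)) ^ (n+1) ≤ s ^ (n+1) := by gcongr
    by_cases htn : t ≤ 0
    · exact htn.trans (by positivity)
    have htp : 0 < t := not_le.1 htn
    have h2 : (2 ^ (j-1)) ^ (n+1) * t ≤ A := (by gcongr : _ ≤ s ^ (n+1) * t).trans hst
    have e : (2:ℝ) ^ (n+1) * (1/2) ^ (j * (n+1)) = ((2 ^ (j-1)) ^ (n+1))⁻¹ := by
      obtain ⟨i, hi⟩ : ∃ i, j = i + 1 := ⟨j - 1, by omega⟩
      rw [hi]; simp only [Nat.add_sub_cancel]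
      rw [pow_mul, ← mul_pow, ← inv_pow]
      congr 1
      rw [pow_succ]; field_simp; rw [← mul_pow]; norm_num
    rw [mul_assoc, e, ← div_eq_mul_inv, le_div_iff₀ (by positivity)]
    linarith

lemma sum_bound {d n : ℕ} (P : Rd d → ℝ≥0∞) {C r₀ : ℝ} (hC : 0 ≤ C) (hr₀ : 0 < r₀)
    (hP : ∀ r ≥ r₀, (∑' x : Rd d, if ‖x‖ ≤ r then P x else 0) ≤ ENNReal.ofReal (C * r ^ n))
    {ε A : ℝ} (hε : 0 < ε) (hε1 : ε * r₀ ≤ 1) (hA : 0 ≤ A) (w : Rd d → ℝ)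
    (hw : ∀ x, w x ≤ A) (hw2 : ∀ x, (ε * ‖x‖) ^ (n+1) * w x ≤ A) :
    (∑' x, P x * ENNReal.ofReal (w x)) ≤ ENNReal.ofReal (2 ^ (n+2) * C * A * (ε ^ n)⁻¹) := by
  set c : ℕ → ℝ := fun j => A * 2 ^ (n+1) * (1/2) ^ (j * (n+1))
  have hc : ∀ j, 0 ≤ c j := fun j => by positivity
  calc (∑' x, P x * ENNReal.ofReal (w x)) ≤ ∑' x, P x * ∑' j : ℕ,
        (if ε * ‖x‖ ≤ 2 ^ j then ENNReal.ofReal (c j) else 0) := by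
        refine ENNReal.tsum_le_tsum fun x => ?_
        gcongr
        exact layer hA (hw x) (by positivity) (hw2 x)
    _ = ∑' x, ∑' j : ℕ, ENNReal.ofReal (c j) * (if ‖x‖ ≤ 2 ^ j / ε then P x else 0) := by
        refine tsum_congr fun x => ?_
        rw [← ENNReal.tsum_mul_left]
        refine tsum_congr fun j => ?_
        have : ε * ‖x‖ ≤ 2 ^ j ↔ ‖x‖ ≤ 2 ^ j / ε := by rw [le_div_iff₀ hε, mul_comm]
        simp only [this]
        split_ifs
        · rw [mul_comm]
        · simp
    _ = ∑' j : ℕ, ENNReal.ofReal (c j) * ∑' x, (if ‖x‖ ≤ 2 ^ j / ε then P x else 0) := by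
        rw [ENNReal.tsum_comm]
        refine tsum_congr fun j => ?_
        rw [ENNReal.tsum_mul_left]
    _ ≤ ∑' j : ℕ, ENNReal.ofReal ((2 ^ (n+1) * C * A * (ε ^ n)⁻¹) * (1/2) ^ j) := by
        refine ENNReal.tsum_le_tsum fun j => ?_
        have hr : r₀ ≤ 2 ^ j / ε := by
          rw [le_div_iff₀ hε]
          have : (1:ℝ) ≤ 2 ^ j := one_le_pow₀ (by norm_num)
          linarith
        refine (mul_le_mul_right (hP _ hr) _).trans ?_
        rw [← ENNReal.ofReal_mul (hc j)]
        apply ENNReal.ofReal_le_ofReal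
        apply le_of_eq
        simp only [c]
        have h3 : ((1:ℝ)/2) ^ (j * (n+1)) * (2 ^ j) ^ n = (1/2) ^ j := by
          rw [mul_add, mul_one, pow_add, pow_mul, mul_right_comm, ← mul_pow, ← mul_pow]; simp
        rw [div_pow (2 ^ j) ε n, ← h3, div_eq_mul_inv ((2 ^ j) ^ n)]
        ring
    _ = _ := by
        rw [← ENNReal.ofReal_tsum_of_nonneg (fun j => by positivity)
          ((summable_geometric_of_lt_one (by norm_num) (by norm_num)).mul_left _), tsum_mul_left,
          tsum_geometric_of_lt_one (by norm_num) (by norm_num)]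
        congr 1
        rw [pow_succ (2:ℝ) (n+1)]; ring

/-- bound for compactly supported test functions -/
lemma bound_compact {d : ℕ} (f : TemperedDist d) (K n : ℕ) (p : (Fin d → ℕ) → Rd d → ℂ)
    (hrep : ∀ φ : SchwartzMap (Rd d) ℂ, HasCompactSupport (⇑φ) →
      f φ = ∑' x : Rd d, ∑ k ∈ mIdx d K, p k x * dkDelta k x φ)
    {C r₀ : ℝ} (hC : 0 ≤ C) (hr₀ : 0 < r₀)
    (hP : ∀ r ≥ r₀, (∑' x : Rd d, if ‖x‖ ≤ r then ∑ k ∈ mIdx d K, (‖p k x‖₊ : ℝ≥0∞) else 0)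
      ≤ ENNReal.ofReal (C * r ^ n))
    {ε A : ℝ} (hε : 0 < ε) (hε1 : ε * r₀ ≤ 1)
    (ψ : SchwartzMap (Rd d) ℂ) (hψ : HasCompactSupport ψ)
    (h1 : ∀ k ≤ K, ∀ x, ‖iteratedFDeriv ℝ k ψ x‖ ≤ A)
    (h2 : ∀ k ≤ K, ∀ x, (ε * ‖x‖) ^ (n+1) * ‖iteratedFDeriv ℝ k ψ x‖ ≤ A) :
    ‖f ψ‖ ≤ 2 ^ (n+2) * C * ((K+1) * A) * (ε ^ n)⁻¹ := by
  have hA : 0 ≤ A := (norm_nonneg _).trans (h1 0 (by omega) 0)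
  set w : Rd d → ℝ := fun x => ∑ k ∈ Finset.range (K+1), ‖iteratedFDeriv ℝ k ψ x‖
  have hb : ∀ a : ℕ → ℝ, (∀ k ≤ K, a k ≤ A) → ∑ k ∈ Finset.range (K+1), a k ≤ (K+1) * A := by
    intro a ha
    refine (Finset.sum_le_card_nsmul _ _ A (fun k hk => ha k ?_)).trans ?_
    · have := Finset.mem_range.1 hk; omega
    · simp
  have key := sum_bound _ hC hr₀ hP hε hε1 (A := (K+1) * A) (by positivity) w
    (fun x => hb _ (fun k hk => h1 k hk x))
    (fun x => by
      simp only [w]; rw [Finset.mul_sum]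
      exact hb _ (fun k hk => h2 k hk x))
  rw [← ENNReal.ofReal_le_ofReal_iff (by positivity), ofReal_norm]
  refine le_trans ?_ key
  rw [hrep ψ hψ]
  refine enorm_tsum_le_tsum_enorm.trans (ENNReal.tsum_le_tsum fun x => ?_)
  rw [Finset.sum_mul]
  refine (enorm_sum_le _ _).trans (Finset.sum_le_sum fun k hk => ?_)
  rw [enorm_mul]
  have hk' : ∑ i, k i ≤ K := (Finset.mem_filter.1 hk).2
  gcongr
  · rfl
  · rw [← ofReal_norm]
    apply ENNReal.ofReal_le_ofReal
    rw [dkDelta, norm_mul, norm_pow, norm_neg, norm_one, one_pow, one_mul]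
    refine (Dmulti_norm_le k (ψ.smooth ⊤) x).trans ?_
    exact Finset.single_le_sum (f := fun k => ‖iteratedFDeriv ℝ k ψ x‖)
      (fun _ _ => norm_nonneg _) (Finset.mem_range.2 (by omega))

lemma bound_schwartz {d : ℕ} (f : TemperedDist d) (K n : ℕ) (p : (Fin d → ℕ) → Rd d → ℂ)
    (hrep : ∀ φ : SchwartzMap (Rd d) ℂ, HasCompactSupport (⇑φ) →
      f φ = ∑' x : Rd d, ∑ k ∈ mIdx d K, p k x * dkDelta k x φ)
    {C r₀ : ℝ} (hC : 0 ≤ C) (hr₀ : 0 < r₀)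
    (hP : ∀ r ≥ r₀, (∑' x : Rd d, if ‖x‖ ≤ r then ∑ k ∈ mIdx d K, (‖p k x‖₊ : ℝ≥0∞) else 0)
      ≤ ENNReal.ofReal (C * r ^ n)) :
    ∃ C₁ : ℝ, 0 ≤ C₁ ∧ ∀ (ε A : ℝ), 0 < ε → ε * r₀ ≤ 1 → 
    ∀ (ψ : SchwartzMap (Rd d) ℂ), 
    (∀ k ≤ K, ∀ x, ‖iteratedFDeriv ℝ k ψ x‖ ≤ A) → 
    (∀ k ≤ K, ∀ x, (ε * ‖x‖) ^ (n+1) * ‖iteratedFDeriv ℝ k ψ x‖ ≤ A) → 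
    ‖f ψ‖ * ε ^ n ≤ C₁ * A := by
  obtain ⟨B, hB, H⟩ := cut_bound d K
  refine ⟨2 ^ (n+2) * C * ((K+1) * (2 ^ K * B)), by positivity, ?_⟩
  intro ε A hε hε1 ψ h1 h2
  have hA : 0 ≤ A := (norm_nonneg _).trans (h1 0 (by omega) 0)
  have hm : ∀ m : ℕ, ‖f (mcut ψ 0 ((m:ℝ)+1))‖ ≤ 2 ^ (n+2) * C * ((K+1) * (2 ^ K * A * B)) * (ε ^ n)⁻¹ := by
    intro m
    have hR : (0:ℝ) < (m : ℝ) + 1 := by positivity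
    have hcut : ∀ x : Rd d, ∀ j ≤ K, (1:ℝ) ^ j * ‖iteratedFDeriv ℝ j (cut (0 : Rd d) ((m:ℝ)+1)) x‖ ≤ B := by
      intro x j hj
      rw [one_pow, one_mul]
      refine le_trans ?_ (H 0 _ hR j hj x)
      apply le_mul_of_one_le_left (norm_nonneg _)
      apply one_le_pow₀
      simp
    apply bound_compact f K n p hrep hC hr₀ hP hε hε1 _ (mcut_compact ψ 0 hR)
    · intro k hk x
      rw [mcut_coe _ _ hR]
      have := leib (ψ.smooth ⊤) (cut_smooth (0 : Rd d) ((m:ℝ)+1)) x (N := K) (ε := 1) (A := A) (B := B)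
        (by norm_num) (fun j hj => by simpa using h1 j hj x) (hcut x) k hk
      simpa using this
    · intro k hk x
      rw [mcut_coe _ _ hR]
      by_cases hx : (ε * ‖x‖) ^ (n+1) = 0
      · rw [hx]; simp; positivity
      have hx' : 0 < (ε * ‖x‖) ^ (n+1) := lt_of_le_of_ne (by positivity) (Ne.symm hx)
      have := leib (ψ.smooth ⊤) (cut_smooth (0 : Rd d) ((m:ℝ)+1)) x (N := K) (ε := 1)
        (A := A / (ε * ‖x‖) ^ (n+1)) (B := B)
        (by norm_num) (fun j hj => by
          rw [one_pow, one_mul, le_div_iff₀ hx', mul_comm]; exact h2 j hj x) (hcut x) k hk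
      rw [one_pow, one_mul] at this
      calc _ ≤ (ε * ‖x‖) ^ (n+1) * (2 ^ K * (A / (ε * ‖x‖) ^ (n+1)) * B) := by gcongr
        _ = _ := by field_simp
  have hlim := ((f.continuous.tendsto ψ).comp (mcut_tendsto ψ)).norm
  have := le_of_tendsto hlim (Filter.Eventually.of_forall hm)
  rw [← div_eq_mul_inv, le_div_iff₀ (by positivity)] at this
  refine this.trans (le_of_eq ?_)
  ring

lemma main_bound {d : ℕ} (f : TemperedDist d) (K M : ℕ) (p : (Fin d → ℕ) → Rd d → ℂ)
    (hrep : ∀ φ : SchwartzMap (Rd d) ℂ, HasCompactSupport (⇑φ) →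
      f φ = ∑' x : Rd d, ∑ k ∈ mIdx d K, p k x * dkDelta k x φ)
    (hgrowth : ∃ C r₀ : ℝ, ∀ r ≥ r₀,
      (∑' x : Rd d, if ‖x‖ ≤ r then ∑ k ∈ mIdx d K, (‖p k x‖₊ : ℝ≥0∞) else 0)
        ≤ ENNReal.ofReal (C * r ^ (d + M))) :
    ∃ C ε₀ : ℝ, 0 ≤ C ∧ 0 < ε₀ ∧ ε₀ ≤ 1 ∧ ∀ (ε A : ℝ) (γ : Rd d) (g : SchwartzMap (Rd d) ℂ),
      0 < ε → ε ≤ ε₀ → tsupport g ⊆ closedBall γ ε →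
      (∀ j ≤ d + M + 1, ∀ y, ε ^ j * ‖iteratedFDeriv ℝ j g y‖ ≤ A) →
      ‖fourierTD f g‖ * ε ^ M ≤ C * A * (1 + ‖γ‖) ^ K := by
  obtain ⟨C0, r0, hg⟩ := hgrowth
  set r₁ := max r0 1
  have hr₁ : 1 ≤ r₁ := le_max_right _ _
  obtain ⟨C₁, hC₁, H⟩ := bound_schwartz f K (d+M) p hrep (C := max C0 0) (r₀ := r₁)
    (le_max_right _ _) (by linarith)
    (fun r hr => (hg r ((le_max_left _ _).trans hr)).trans (by
      apply ENNReal.ofReal_le_ofReal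
      have : 0 ≤ r := by linarith [hr.le]
      gcongr
      exact le_max_left _ _))
  set V : ℝ := volume.real (ball (0 : Rd d) 1)
  set D : ℝ := (2 * Real.pi) ^ K * (2 * K + 2) ^ (d+M+1) * ((K+1) * (d+M+2) * V)
  have hD : 0 ≤ D := by positivity
  refine ⟨C₁ * D, r₁⁻¹, by positivity, by positivity, inv_le_one_of_one_le₀ hr₁, ?_⟩
  intro ε A γ g hε hε1 hs hA
  have hεr : ε * r₁ ≤ 1 := by
    have : ε * r₁ ≤ r₁⁻¹ * r₁ := by gcongr
    rwa [inv_mul_cancel₀ (by positivity)] at this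
  have hε1' : ε ≤ 1 := hε1.trans (inv_le_one_of_one_le₀ hr₁)
  have hA0 : 0 ≤ A := le_trans (by positivity) (hA 0 (by omega) 0)
  have hint : ∀ a ≤ K, ∀ b ≤ d+M+1, ε ^ b * (∫ v, ‖v‖ ^ a * ‖iteratedFDeriv ℝ b g v‖) ≤
      (1 + ‖γ‖) ^ K * A * (ε ^ d * V) := by
    intro a ha b hb
    rw [← integral_const_mul]
    have h0 : ∀ v, v ∉ closedBall γ ε → ε ^ b * (‖v‖ ^ a * ‖iteratedFDeriv ℝ b g v‖) = 0 := by
      intro v hv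
      have : iteratedFDeriv ℝ b g v = 0 := by
        by_contra hne
        exact hv (hs (support_iteratedFDeriv_subset b hne))
      simp [this]
    rw [← setIntegral_eq_integral_of_forall_compl_eq_zero h0]
    have h1 := norm_setIntegral_le_of_norm_le_const (μ := volume) (s := closedBall γ ε)
      (f := fun v => ε ^ b * (‖v‖ ^ a * ‖iteratedFDeriv ℝ b g v‖)) (C := (1 + ‖γ‖) ^ K * A)
      measure_closedBall_lt_top
      (fun v hv => by
        rw [Real.norm_of_nonneg (by positivity)]
        have hv' : ‖v‖ ≤ 1 + ‖γ‖ := by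
          have h2 : ‖v - γ‖ ≤ ε := by simpa [dist_eq_norm] using hv
          have h3 := norm_sub_norm_le v γ
          linarith
        calc _ = ‖v‖ ^ a * (ε ^ b * ‖iteratedFDeriv ℝ b g v‖) := by ring
          _ ≤ (1 + ‖γ‖) ^ a * A := by gcongr; exact hA b hb v
          _ ≤ (1 + ‖γ‖) ^ K * A := by
            gcongr
            linarith [norm_nonneg γ])
    refine (Real.le_norm_self _).trans (h1.trans (le_of_eq ?_))
    congr 1
    rw [measureReal_def, Measure.addHaar_closedBall _ _ hε.le, ENNReal.toReal_mul,
      ENNReal.toReal_ofReal (by positivity)]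
    simp [V, measureReal_def]
  have hF : ∀ k ≤ K, ∀ l ≤ d+M+1, ∀ x, (ε * ‖x‖) ^ l * ‖iteratedFDeriv ℝ k (fourierTransformCLM ℂ g) x‖ ≤
      D * ε ^ d * A * (1 + ‖γ‖) ^ K := by
    intro k hk l hl x
    have h1 := Real.pow_mul_norm_iteratedFDeriv_fourier_le (f := g) (K := ⊤) (N := ⊤) (g.smooth ⊤)
      (fun k n _ _ => integrable_pow_mul_iteratedFDeriv _ g k n) (k := k) (n := l) le_top le_top x
    have e : iteratedFDeriv ℝ k (fourierTransformCLM ℂ g) x = iteratedFDeriv ℝ k (FourierTransform.fourier (g : Rd d → ℂ)) x := rfl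
    rw [e, mul_pow, mul_assoc]
    calc _ ≤ ε ^ l * ((2 * Real.pi) ^ k * (2 * k + 2) ^ l *
        ∑ p ∈ Finset.range (k + 1) ×ˢ Finset.range (l + 1), ∫ v, ‖v‖ ^ p.1 * ‖iteratedFDeriv ℝ p.2 g v‖) := by
          gcongr
      _ = (2 * Real.pi) ^ k * (2 * k + 2) ^ l *
        ∑ p ∈ Finset.range (k + 1) ×ˢ Finset.range (l + 1), ε ^ l * ∫ v, ‖v‖ ^ p.1 * ‖iteratedFDeriv ℝ p.2 g v‖ := by
          rw [← Finset.mul_sum]; ring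
      _ ≤ (2 * Real.pi) ^ k * (2 * k + 2) ^ l *
        ∑ p ∈ Finset.range (k + 1) ×ˢ Finset.range (l + 1), ((1 + ‖γ‖) ^ K * A * (ε ^ d * V)) := by
          refine mul_le_mul_of_nonneg_left (Finset.sum_le_sum fun q hq => ?_) (by positivity)
          have hq' := Finset.mem_product.1 hq
          have hq1 := Finset.mem_range.1 hq'.1
          have hq2 := Finset.mem_range.1 hq'.2
          refine le_trans ?_ (hint q.1 (by omega) q.2 (by omega))
          apply mul_le_mul_of_nonneg_right
          · exact pow_le_pow_of_le_one hε.le hε1' (by omega)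
          · exact integral_nonneg fun v => by positivity
      _ = (2 * Real.pi) ^ k * (2 * k + 2) ^ l * (((k:ℝ)+1) * (l+1) * ((1 + ‖γ‖) ^ K * A * (ε ^ d * V))) := by
          simp
      _ ≤ (2 * Real.pi) ^ K * (2 * K + 2) ^ (d+M+1) * (((K:ℝ)+1) * (d+M+2) * ((1 + ‖γ‖) ^ K * A * (ε ^ d * V))) := by
          have hpi : 1 ≤ 2 * Real.pi := by linarith [Real.pi_gt_three]
          have hk' : (k:ℝ) ≤ K := by exact_mod_cast hk
          have hl' : (l:ℝ) + 1 ≤ d+M+2 := by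
            have : (l:ℝ) ≤ ((d+M+1 : ℕ) : ℝ) := by exact_mod_cast hl
            push_cast at this; linarith
          have h2 : (2 * (k:ℝ) + 2) ^ l ≤ (2 * K + 2) ^ (d+M+1) := by
            calc (2 * (k:ℝ) + 2) ^ l ≤ (2 * K + 2) ^ l := by gcongr
              _ ≤ _ := pow_le_pow_right₀ (by linarith [Nat.cast_nonneg (α := ℝ) K]) hl
          have h3 : (2 * Real.pi) ^ k ≤ (2 * Real.pi) ^ K := pow_le_pow_right₀ hpi hk
          gcongr
      _ = _ := by simp only [D]; ring
  have := H ε (D * ε ^ d * A * (1 + ‖γ‖) ^ K) hε hεr (fourierTransformCLM ℂ g)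
    (fun k hk x => by simpa using hF k hk 0 (by omega) x)
    (fun k hk x => hF k hk _ le_rfl x)
  change ‖f (fourierTransformCLM ℂ g)‖ * ε ^ M ≤ _
  rw [pow_add] at this
  have hεd : 0 < ε ^ d := by positivity
  refine le_of_mul_le_mul_left ?_ hεd
  calc _ = ‖f (fourierTransformCLM ℂ g)‖ * (ε ^ d * ε ^ M) := by ring
    _ ≤ _ := this
    _ = _ := by ring

end part3

section part4
open scoped ContDiff Manifold

set_option maxHeartbeats 1000000 in
lemma td_vanish {d : ℕ} (T : TemperedDist d) (φ : SchwartzMap (Rd d) ℂ) (hφ : HasCompactSupport φ)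
    (hd : ∀ x ∈ tdSupport T, x ∉ tsupport φ) : T φ = 0 := by
  have h1 : ∀ x : tsupport φ, ∃ U : Set (Rd d), IsOpen U ∧ (x : Rd d) ∈ U ∧
      ∀ ψ : SchwartzMap (Rd d) ℂ, HasCompactSupport ψ → tsupport ψ ⊆ U → T ψ = 0 := by
    intro x
    have hx : (x : Rd d) ∉ tdSupport T := fun h => hd _ h x.2
    simp only [tdSupport, Set.mem_ofPred_eq, not_forall, not_exists, not_and, not_not] at hx
    obtain ⟨U, hU, hxU, H⟩ := hx
    exact ⟨U, hU, hxU, H⟩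
  choose U hU hxU HU using h1
  obtain ⟨t, ht⟩ := hφ.isCompact.elim_finite_subcover U hU
    (fun x hx => Set.mem_iUnion.2 ⟨⟨x, hx⟩, hxU _⟩)
  obtain ⟨ρ, hρ⟩ := SmoothPartitionOfUnity.exists_isSubordinate 𝓘(ℝ, Rd d)
    (isClosed_tsupport φ) (fun i : t => U i) (fun i => hU i) (by
      intro x hx
      obtain ⟨i, hi, hxi⟩ := Set.mem_iUnion₂.1 (ht hx)
      exact Set.mem_iUnion.2 ⟨⟨i, hi⟩, hxi⟩)
  have hsm : ∀ i : t, ContDiff ℝ ∞ (fun x => φ x * ((ρ i x : ℝ) : ℂ)) := fun i =>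
    (φ.smooth ⊤).mul (Complex.ofRealCLM.contDiff.comp (ρ i).contMDiff.contDiff)
  have hcs : ∀ i : t, HasCompactSupport (fun x => φ x * ((ρ i x : ℝ) : ℂ)) := fun i =>
    HasCompactSupport.mul_right hφ
  have hsum : φ = ∑ i : t, (hcs i).toSchwartzMap (hsm i) := by
    ext x
    rw [sum_apply]
    change φ x = ∑ i : t, φ x * ((ρ i x : ℝ) : ℂ)
    by_cases hx : x ∈ tsupport φ
    · have := ρ.sum_eq_one hx
      rw [finsum_eq_sum_of_fintype] at this
      rw [← Finset.mul_sum, ← Complex.ofReal_sum, this]; simp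
    · rw [image_eq_zero_of_notMem_tsupport hx]; simp
  have hT : T φ = ∑ i : t, T ((hcs i).toSchwartzMap (hsm i)) :=
    (congrArg T hsum).trans (map_sum T _ _)
  rw [hT]
  apply Finset.sum_eq_zero
  intro i _
  apply HU i _ (hcs i)
  refine Set.Subset.trans ?_ (hρ i)
  refine (tsupport_mul_subset_right (f := φ) (g := fun x => ((ρ i x : ℝ) : ℂ))).trans ?_
  apply closure_mono
  intro x hx h
  apply hx
  simp only [h, Complex.ofReal_zero]

lemma td_congr {d : ℕ} (T : TemperedDist d) (φ φ' : SchwartzMap (Rd d) ℂ) (hφ : HasCompactSupport φ)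
    (hφ' : HasCompactSupport φ')
    (h : ∀ x ∈ tdSupport T, φ =ᶠ[nhds x] φ') : T φ = T φ' := by
  rw [← sub_eq_zero, ← map_sub]
  apply td_vanish
  · exact hφ.sub hφ'
  · intro x hx
    rw [notMem_tsupport_iff_eventuallyEq]
    filter_upwards [h x hx] with y hy
    simp [hy]

def thS {d : ℕ} (m : Fin d → ℕ) : SchwartzMap (Rd d) ℂ :=
  (HasCompactSupport.mul_left (f := tmon m) (chi0_compact d)).toSchwartzMap
    ((tmon_smooth m).mul (chi0_smooth d))

def th {d : ℕ} (m : Fin d → ℕ) (γ : Rd d) : SchwartzMap (Rd d) ℂ :=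
  SchwartzMap.compSubConstCLM ℝ γ (thS m)

lemma th_iter {d : ℕ} (m : Fin d → ℕ) (γ : Rd d) (j : ℕ) (y : Rd d) :
    iteratedFDeriv ℝ j (th m γ) y = iteratedFDeriv ℝ j (thS m) (y - γ) := by
  have : ⇑(th m γ) = fun z => thS m (z - γ) := by ext z; rfl
  rw [this, iteratedFDeriv_comp_sub]

lemma th_jet {d : ℕ} (k m : Fin d → ℕ) (γ : Rd d) :
    Dmulti k (th m γ) γ = if k = m then 1 else 0 := by
  rw [← Dmulti_tmon]
  obtain ⟨v, -, H⟩ := Dmulti_vec k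
  rw [H _ ((th m γ).smooth ⊤), H _ (tmon_smooth m), th_iter, sub_self]
  have : (thS m : Rd d → ℂ) =ᶠ[nhds 0] tmon m := by
    filter_upwards [Metric.ball_mem_nhds (0 : Rd d) (by norm_num : (0:ℝ) < 1/2)] with y hy
    change tmon m y * chi0 d y = _
    rw [chi0_one (mem_ball_zero_iff.1 hy).le, mul_one]
  rw [(this.iteratedFDeriv ℝ _).eq_of_nhds]

lemma flat_cut {d M K : ℕ} {T : TemperedDist d} {C ε₀ : ℝ} (hC : 0 ≤ C) (hε₀ : ε₀ ≤ 1)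
    (H : ∀ (ε A : ℝ) (γ : Rd d) (g : SchwartzMap (Rd d) ℂ),
      0 < ε → ε ≤ ε₀ → tsupport g ⊆ closedBall γ ε →
      (∀ j ≤ d + M + 1, ∀ y, ε ^ j * ‖iteratedFDeriv ℝ j g y‖ ≤ A) →
      ‖T g‖ * ε ^ M ≤ C * A * (1 + ‖γ‖) ^ K) :
    ∃ C' : ℝ, 0 ≤ C' ∧ ∀ (L : ℕ) (A : ℝ) (γ : Rd d) (φ : SchwartzMap (Rd d) ℂ),
      (∀ j ≤ max L (d + M + 1), ∀ y, ‖iteratedFDeriv ℝ j φ y‖ ≤ A) →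
      (∀ j < L, iteratedFDeriv ℝ j φ γ = 0) → ∀ ε, 0 < ε → ε ≤ ε₀ →
      ‖T (mcut φ γ ε)‖ * ε ^ M ≤ C' * A * ε ^ L * (1 + ‖γ‖) ^ K := by
  obtain ⟨B, hB, HB⟩ := cut_bound d (d + M + 1)
  refine ⟨C * 2 ^ (d + M + 1) * B, by positivity, ?_⟩
  intro L A γ φ hA h0 ε hε hε1
  have hA0 : 0 ≤ A := (norm_nonneg _).trans (hA 0 (by omega) 0)
  refine (H ε (2 ^ (d + M + 1) * (A * ε ^ L) * B) γ (mcut φ γ ε) hε hε1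
    (mcut_tsupport φ γ hε) ?_).trans (le_of_eq (by ring))
  intro j hj y
  by_cases hy : ‖y - γ‖ ≤ ε
  · rw [mcut_coe _ _ hε]
    exact leib (φ.smooth ⊤) (cut_smooth γ ε) y hε.le
      (flat (φ.smooth ⊤) γ hA h0 hε.le (hε1.trans hε₀) hy)
      (fun j hj => HB γ ε hε j hj y) j hj
  · have : iteratedFDeriv ℝ j (mcut φ γ ε) y = 0 := by
      by_contra hne
      apply hy
      have := mcut_tsupport φ γ hε (support_iteratedFDeriv_subset j hne)
      simpa [dist_eq_norm] using this
    rw [this]; simp; positivity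

end part4

section part5
open scoped ContDiff

def DL {d : ℕ} (k : Fin d → ℕ) (γ : Rd d) : SchwartzMap (Rd d) ℂ →ₗ[ℂ] ℂ where
  toFun φ := Dmulti k φ γ
  map_add' φ ψ := by
    obtain ⟨v, -, H⟩ := Dmulti_vec k
    rw [H _ ((φ + ψ).smooth ⊤), H _ (φ.smooth ⊤), H _ (ψ.smooth ⊤)]
    have : (⇑(φ + ψ) : Rd d → ℂ) = ⇑φ + ⇑ψ := rfl
    rw [this, iteratedFDeriv_add_apply ((φ.smooth _).contDiffAt) ((ψ.smooth _).contDiffAt)]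
    rfl
  map_smul' c φ := by
    obtain ⟨v, -, H⟩ := Dmulti_vec k
    rw [H _ ((c • φ).smooth ⊤), H _ (φ.smooth ⊤)]
    have : (⇑(c • φ) : Rd d → ℂ) = c • ⇑φ := rfl
    rw [this, iteratedFDeriv_const_smul_apply ((φ.smooth _).contDiffAt)]
    rfl

def mcutL {d : ℕ} (γ : Rd d) {ε : ℝ} (hε : 0 < ε) :
    SchwartzMap (Rd d) ℂ →ₗ[ℂ] SchwartzMap (Rd d) ℂ where
  toFun φ := mcut φ γ ε
  map_add' φ ψ := by
    ext y
    simp only [SchwartzMap.add_apply, mcut_coe _ _ hε]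
    ring
  map_smul' c φ := by
    ext y
    simp only [SchwartzMap.smul_apply, mcut_coe _ _ hε, RingHom.id_apply, smul_eq_mul]
    ring

lemma mem_mIdx {d M : ℕ} {k : Fin d → ℕ} (h : ∑ i, k i ≤ M) : k ∈ mIdx d M := by
  unfold mIdx
  rw [Finset.mem_filter, Finset.mem_Iic]
  exact ⟨fun i => (Finset.single_le_sum (fun _ _ => Nat.zero_le _) (Finset.mem_univ i)).trans h, h⟩

lemma exists_sep {d : ℕ} {Γ : Set (Rd d)} (hΓ : LocFinite Γ) {ε₀ : ℝ} (h0 : 0 < ε₀) (γ : Rd d) :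
    ∃ e : ℝ, 0 < e ∧ e ≤ ε₀ ∧ ∀ γ' ∈ Γ, γ' ≠ γ → e < ‖γ' - γ‖ := by
  have hf : ((Γ ∩ ball γ 1) \ {γ}).Finite := (hΓ γ 1).subset diff_subset
  have hn : ((Γ ∩ ball γ 1) \ {γ})ᶜ ∈ nhds γ := hf.isClosed.isOpen_compl.mem_nhds (by simp)
  obtain ⟨r, hr, hs⟩ := Metric.mem_nhds_iff.1 hn
  refine ⟨min ε₀ (min (1/2) (r/2)), by positivity, min_le_left _ _, ?_⟩
  intro γ' h1 h2
  by_contra hle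
  push Not at hle
  have h3 : ‖γ' - γ‖ ≤ 1/2 := hle.trans ((min_le_right _ _).trans (min_le_left _ _))
  have h4 : ‖γ' - γ‖ ≤ r/2 := hle.trans ((min_le_right _ _).trans (min_le_right _ _))
  have h5 : γ' ∈ ball γ r := by rw [mem_ball, dist_eq_norm]; linarith
  exact hs h5 ⟨⟨h1, by rw [mem_ball, dist_eq_norm]; linarith⟩, h2⟩

lemma mcut_near {d : ℕ} (φ : SchwartzMap (Rd d) ℂ) (γ : Rd d) {ε : ℝ} (hε : 0 < ε) :
    (mcut φ γ ε : Rd d → ℂ) =ᶠ[nhds γ] φ := by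
  filter_upwards [Metric.ball_mem_nhds γ (half_pos hε)] with y hy
  rw [mem_ball, dist_eq_norm] at hy
  rw [mcut_coe _ _ hε]
  simp only
  rw [cut_one hε hy.le, mul_one]

lemma mcut_far {d : ℕ} (φ : SchwartzMap (Rd d) ℂ) (γ : Rd d) {ε : ℝ} (hε : 0 < ε) {x : Rd d}
    (hx : ε < ‖x - γ‖) : (mcut φ γ ε : Rd d → ℂ) =ᶠ[nhds x] 0 := by
  rw [← notMem_tsupport_iff_eventuallyEq]
  intro h
  have := mcut_tsupport φ γ hε h
  rw [mem_closedBall, dist_eq_norm] at this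
  linarith

lemma local_rep {d M K : ℕ} {T : TemperedDist d} {C' ε₀ : ℝ}
    (H : ∀ (L : ℕ) (A : ℝ) (γ : Rd d) (φ : SchwartzMap (Rd d) ℂ),
      (∀ j ≤ max L (d + M + 1), ∀ y, ‖iteratedFDeriv ℝ j φ y‖ ≤ A) →
      (∀ j < L, iteratedFDeriv ℝ j φ γ = 0) → ∀ ε, 0 < ε → ε ≤ ε₀ →
      ‖T (mcut φ γ ε)‖ * ε ^ M ≤ C' * A * ε ^ L * (1 + ‖γ‖) ^ K)
    (γ : Rd d) {e : ℝ} (he : 0 < e) (he1 : e ≤ ε₀)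
    (hsep : ∀ γ' ∈ tdSupport T, γ' ≠ γ → e < ‖γ' - γ‖) (φ : SchwartzMap (Rd d) ℂ) :
    T (mcut φ γ e) = ∑ m ∈ mIdx d M, Dmulti m φ γ * T (mcut (th m γ) γ e) := by
  set ψ : SchwartzMap (Rd d) ℂ := φ - ∑ m ∈ mIdx d M, Dmulti m φ γ • th m γ with hψ
  have hflat : ∀ j < M + 1, iteratedFDeriv ℝ j ψ γ = 0 := by
    intro j hj
    refine jet_zero (ψ.smooth ⊤) γ j (fun k hk => ?_)
    change DL k γ ψ = 0
    have hkm : k ∈ mIdx d M := mem_mIdx (by omega)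
    have h1 : ∀ m, DL k γ (th m γ) = if k = m then 1 else 0 := fun m => th_jet k m γ
    rw [hψ, map_sub, map_sum]
    simp only [map_smul, h1, smul_eq_mul, mul_ite, mul_one, mul_zero, Finset.sum_ite_eq, hkm, if_true]
    exact sub_self _
  obtain ⟨A, hA, hAb⟩ := schw_bound ψ (max (M + 1) (d + M + 1))
  have hb : ∀ ε, 0 < ε → ε ≤ e → ‖T (mcut ψ γ e)‖ ≤ C' * A * (1 + ‖γ‖) ^ K * ε := by
    intro ε h1 h2
    have h3 : T (mcut ψ γ e) = T (mcut ψ γ ε) := by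
      apply td_congr _ _ _ (mcut_compact _ _ he) (mcut_compact _ _ h1)
      intro x hx
      by_cases hxg : x = γ
      · subst hxg
        exact (mcut_near ψ x he).trans (mcut_near ψ x h1).symm
      · have := hsep x hx hxg
        exact (mcut_far ψ γ he this).trans (mcut_far ψ γ h1 (h2.trans_lt this)).symm
    have h4 := H (M + 1) A γ ψ hAb hflat ε h1 (h2.trans he1)
    rw [h3]
    have h5 : 0 < ε ^ M := by positivity
    refine le_of_mul_le_mul_right (h4.trans (le_of_eq (by ring))) h5
  have hz : ‖T (mcut ψ γ e)‖ ≤ 0 := by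
    have ht : Filter.Tendsto (fun ε : ℝ => C' * A * (1 + ‖γ‖) ^ K * ε) (nhdsWithin 0 (Ioi 0)) (nhds 0) := by
      have : Filter.Tendsto (fun ε : ℝ => C' * A * (1 + ‖γ‖) ^ K * ε) (nhds 0)
          (nhds (C' * A * (1 + ‖γ‖) ^ K * 0)) := Filter.tendsto_id.const_mul _
      rw [mul_zero] at this
      exact this.mono_left nhdsWithin_le_nhds
    refine ge_of_tendsto ht ?_
    filter_upwards [Ioc_mem_nhdsGT he] with ε hε
    exact hb ε hε.1 hε.2
  have hz' : T (mcut ψ γ e) = 0 := norm_le_zero_iff.1 hz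
  have hl : T (mcutL γ he ψ) = 0 := hz'
  rw [hψ, map_sub, map_sub, sub_eq_zero, map_sum, map_sum] at hl
  simp only [map_smul, smul_eq_mul] at hl
  exact hl

lemma Dmulti_off {d : ℕ} (m : Fin d → ℕ) (φ : SchwartzMap (Rd d) ℂ) {x : Rd d} (hx : x ∉ tsupport φ) :
    Dmulti m φ x = 0 := by
  have h := Dmulti_norm_le m (φ.smooth ⊤) x
  have : iteratedFDeriv ℝ (∑ i, m i) φ x = 0 := by
    by_contra hne
    exact hx (support_iteratedFDeriv_subset _ hne)
  rw [this, norm_zero] at h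
  exact norm_le_zero_iff.1 h

lemma global_rep {d : ℕ} {T : TemperedDist d} (hΓ : LocFinite (tdSupport T)) (e : Rd d → ℝ)
    (he : ∀ γ, 0 < e γ) (hsep : ∀ γ, ∀ γ' ∈ tdSupport T, γ' ≠ γ → e γ < ‖γ' - γ‖)
    (φ : SchwartzMap (Rd d) ℂ) (hφ : HasCompactSupport φ) :
    ∃ S : Finset (Rd d), (∀ x ∈ S, x ∈ tdSupport T) ∧ (∀ x ∈ tdSupport T, x ∉ S → x ∉ tsupport φ) ∧
      T φ = ∑ γ ∈ S, T (mcut φ γ (e γ)) := by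
  obtain ⟨R, hR⟩ := hφ.isCompact.isBounded.subset_ball (0 : Rd d)
  refine ⟨(hΓ 0 R).toFinset, fun x hx => ((hΓ 0 R).mem_toFinset.1 hx).1, ?_, ?_⟩
  · intro x hx hxS hxt
    exact hxS ((hΓ 0 R).mem_toFinset.2 ⟨hx, hR hxt⟩)
  · set S := (hΓ 0 R).toFinset with hS
    rw [← map_sum]
    have hco : ⇑(∑ γ ∈ S, mcut φ γ (e γ)) = fun y => ∑ γ ∈ S, mcut φ γ (e γ) y := by
      ext y; exact SchwartzMap.sum_apply _ _ _
    apply td_congr _ _ _ hφ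
    · rw [hco]
      have hK : IsCompact (⋃ γ ∈ S, closedBall γ (e γ)) :=
        S.isCompact_biUnion (fun γ _ => isCompact_closedBall γ (e γ))
      refine HasCompactSupport.intro hK (fun x hx => ?_)
      refine Finset.sum_eq_zero (fun γ hγ => ?_)
      by_contra hne
      apply hx
      exact mem_biUnion hγ (mcut_tsupport φ γ (he γ) (subset_tsupport _ hne))
    · intro x hx
      rw [hco]
      have hall : ∀ᶠ y in nhds x, ∀ γ ∈ S, γ ≠ x → mcut φ γ (e γ) y = 0 := by
        rw [Filter.eventually_all_finset]
        intro γ _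
        by_cases hg : γ = x
        · exact Filter.Eventually.of_forall (fun y h => absurd hg h)
        · filter_upwards [mcut_far φ γ (he γ) (hsep γ x hx (Ne.symm hg))] with y hy _
          exact hy
      by_cases hxS : x ∈ S
      · filter_upwards [hall, mcut_near φ x (he x)] with y h1 h2
        rw [Finset.sum_eq_single_of_mem x hxS (fun γ hγ hne => h1 γ hγ hne), h2]
      · have hx0 : x ∉ tsupport φ := fun hxt => hxS ((hΓ 0 R).mem_toFinset.2 ⟨hx, hR hxt⟩)
        filter_upwards [hall, notMem_tsupport_iff_eventuallyEq.1 hx0] with y h1 h2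
        rw [h2, Finset.sum_eq_zero]
        · rfl
        · intro γ hγ
          exact h1 γ hγ (fun h => hxS (h ▸ hγ))

end part5

/-- (Proposition 3.) Let
`f = Σ_{λ∈Λ} Σ_{‖k‖≤K} p_k(λ) D^k δ_λ` be a tempered distribution on `ℝ^d`
with locally finite support and locally finite spectrum `Γ`, such that
`Σ_{|λ|≤r} Σ_{‖k‖≤K} |p_k(λ)| = O(r^{d+M})`. Then
`f̂ = Σ_{γ∈Γ} Σ_{‖m‖≤M} q_m(γ) D^m δ_γ` and `q_m(γ) = O(|γ|^K)` for `‖m‖ = M`. -/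
theorem statement10 {d : ℕ} (f : TemperedDist d) (Λ : Set (Rd d)) (K M : ℕ)
    (p : (Fin d → ℕ) → Rd d → ℂ)
    (hsupp : ∀ k x, p k x ≠ 0 → x ∈ Λ)
    (hΛ : LocFinite Λ)
    (hΓ : LocFinite (tdSupport (fourierTD f)))
    (hrep : ∀ φ : SchwartzMap (Rd d) ℂ, HasCompactSupport (⇑φ) →
      f φ = ∑' x : Rd d, ∑ k ∈ mIdx d K, p k x * dkDelta k x φ)
    (hgrowth : ∃ C r₀ : ℝ, ∀ r ≥ r₀,
      (∑' x : Rd d, if ‖x‖ ≤ r then ∑ k ∈ mIdx d K, (‖p k x‖₊ : ℝ≥0∞) else 0)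
        ≤ ENNReal.ofReal (C * r ^ (d + M))) :
    ∃ q : (Fin d → ℕ) → Rd d → ℂ,
      (∀ m x, q m x ≠ 0 → x ∈ tdSupport (fourierTD f)) ∧
      (∀ φ : SchwartzMap (Rd d) ℂ, HasCompactSupport (⇑φ) →
        fourierTD f φ = ∑' x : Rd d, ∑ m ∈ mIdx d M, q m x * dkDelta m x φ) ∧
      (∀ m ∈ mIdx d M, (∑ i, m i) = M →
        ∃ C' R : ℝ, ∀ x : Rd d, R ≤ ‖x‖ → ‖q m x‖ ≤ C' * ‖x‖ ^ K) := by
  classical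
  obtain ⟨C, ε₀, hC, hε₀, hε₀1, hmain⟩ := main_bound f K M p hrep hgrowth
  obtain ⟨C', hC', H⟩ := flat_cut (T := fourierTD f) (K := K) (M := M) hC hε₀1 hmain
  choose e he he1 hsep using fun γ => exists_sep hΓ hε₀ γ
  refine ⟨fun m x => if x ∈ tdSupport (fourierTD f) then
    (-1 : ℂ) ^ (∑ i, m i) * fourierTD f (mcut (th m x) x (e x)) else 0, ?_, ?_, ?_⟩
  · intro m x h
    by_contra hx
    exact h (if_neg hx)
  · intro φ hφ
    obtain ⟨S, hS1, hS2, hS3⟩ := global_rep hΓ e he hsep φ hφ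
    rw [hS3, tsum_eq_sum (s := S)]
    · refine Finset.sum_congr rfl (fun γ hγ => ?_)
      rw [local_rep H γ (he γ) (he1 γ) (hsep γ) φ]
      refine Finset.sum_congr rfl (fun m _ => ?_)
      beta_reduce
      rw [if_pos (hS1 γ hγ)]
      unfold dkDelta
      have h1 : ((-1 : ℂ) ^ (∑ i, m i)) * (-1) ^ (∑ i, m i) = 1 := by
        rw [← mul_pow]; simp
      linear_combination (-(Dmulti m φ γ * fourierTD f (mcut (th m γ) γ (e γ)))) * h1
    · intro x hx
      refine Finset.sum_eq_zero (fun m _ => ?_)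
      by_cases hxG : x ∈ tdSupport (fourierTD f)
      · unfold dkDelta
        rw [Dmulti_off m φ (hS2 x hxG hx)]
        simp
      · beta_reduce
        rw [if_neg hxG, zero_mul]
  · intro m _ hm
    obtain ⟨A, hA, hAb⟩ := schw_bound (thS m) (max M (d + M + 1))
    refine ⟨C' * A * 2 ^ K, 1, fun x hx => ?_⟩
    simp only
    split_ifs with hxG
    · have hflat : ∀ j < M, iteratedFDeriv ℝ j (th m x) x = 0 := by
        intro j hj
        refine jet_zero ((th m x).smooth ⊤) x j (fun k hk => ?_)
        rw [th_jet, if_neg]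
        rintro rfl
        omega
      have h1 := H M A x (th m x) (fun j hj y => by rw [th_iter]; exact hAb j hj _) hflat
        (e x) (he x) (he1 x)
      have h2 : 0 < e x ^ M := pow_pos (he x) M
      have h3 : ‖fourierTD f (mcut (th m x) x (e x))‖ ≤ C' * A * (1 + ‖x‖) ^ K :=
        le_of_mul_le_mul_right (h1.trans (le_of_eq (by ring))) h2
      have h4 : (1 + ‖x‖) ^ K ≤ 2 ^ K * ‖x‖ ^ K := by
        rw [← mul_pow]
        exact pow_le_pow_left₀ (by positivity) (by linarith) K
      rw [norm_mul, norm_pow, norm_neg, norm_one, one_pow, one_mul, mul_assoc]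
      exact h3.trans (mul_le_mul_of_nonneg_left h4 (by positivity))
    · rw [norm_zero]
      positivity
end
end

section
/- Let μ be a purely point measure on ℝ^d belonging to S*(ℝ^d) with uniformly bounded masses sup_{λ∈supp μ} |μ(λ)| < ∞, whose support has bounded density, and whose spectrum supp μ̂ is locally finite. Then μ̂ is a purely point measure with uniformly bounded masses. -/
open MeasureTheory SchwartzMap Metric Set
open scoped Pointwise RealInnerProductSpace ENNReal NNReal

noncomputable section

open scoped Topology ContDiff Manifold FourierTransform
open Filter

theorem exists_schwartz {d : ℕ} (g : Rd d → ℂ) (h1 : HasCompactSupport g) (h2 : ContDiff ℝ ∞ g) :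
    ∃ ψ : SchwartzMap (Rd d) ℂ, ⇑ψ = g := ⟨h1.toSchwartzMap h2, rfl⟩

theorem vanish_off {d : ℕ} (F : TemperedDist d) (φ : SchwartzMap (Rd d) ℂ)
    (hc : HasCompactSupport (⇑φ)) (hd : Disjoint (tsupport (⇑φ)) (tdSupport F)) : F φ = 0 := by
  have h : ∀ x : tsupport (⇑φ), ∃ U : Set (Rd d), IsOpen U ∧ x.1 ∈ U ∧
      ∀ ψ : SchwartzMap (Rd d) ℂ, HasCompactSupport (⇑ψ) → tsupport (⇑ψ) ⊆ U → F ψ = 0 := by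
    intro x
    have hx : x.1 ∉ tdSupport F := fun h => Set.disjoint_left.1 hd x.2 h
    simp only [tdSupport, Set.mem_ofPred_eq] at hx
    push Not at hx
    exact hx
  choose U hUo hUx hU using h
  obtain ⟨ρ, hρ⟩ := SmoothPartitionOfUnity.exists_isSubordinate (𝓘(ℝ, Rd d))
    (isClosed_tsupport (⇑φ)) U hUo (fun x hx => Set.mem_iUnion.2 ⟨⟨x, hx⟩, hUx _⟩)
  have hfin := ρ.locallyFinite.finite_nonempty_inter_compact hc
  have hψ : ∀ i, ∃ ψ : SchwartzMap (Rd d) ℂ, ⇑ψ = fun x => ((ρ i x : ℝ) : ℂ) * φ x := by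
    intro i
    refine exists_schwartz _ ?_ ?_
    · exact HasCompactSupport.mul_left hc
    · have : ContDiff ℝ ∞ (ρ i) := (ρ i).contMDiff.contDiff
      exact (Complex.ofRealCLM.contDiff.comp this).mul (φ.smooth ⊤)
  choose ψ hψ using hψ
  have hsum : φ = ∑ i ∈ hfin.toFinset, ψ i := by
    ext x
    rw [sum_apply]
    simp only [hψ, ← Finset.sum_mul]
    by_cases hx : x ∈ tsupport (⇑φ)
    · have h1 := ρ.sum_eq_one hx
      rw [finsum_eq_sum_of_support_subset (s := hfin.toFinset)] at h1
      · rw [← Complex.ofReal_sum, h1]; simp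
      · intro i hi
        simp only [Set.Finite.coe_toFinset, Set.mem_ofPred_eq]
        exact ⟨x, hi, hx⟩
    · rw [image_eq_zero_of_notMem_tsupport hx]; simp
  rw [hsum, map_sum]
  refine Finset.sum_eq_zero fun i _ => hU i _ ?_ ?_
  · rw [hψ]; exact HasCompactSupport.mul_left hc
  · rw [hψ]
    refine (tsupport_mul_subset_left).trans (Subset.trans ?_ (hρ i))
    exact closure_mono fun x hx => by simpa using hx

theorem fourier_scale {d : ℕ} (ψ Ψ : SchwartzMap (Rd d) ℂ) (ε : ℝ) (hε : 0 < ε) (γ : Rd d)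
    (h : ∀ x, Ψ x = ψ (ε⁻¹ • (x - γ))) (y : Rd d) :
    ‖fourierTransformCLM ℂ Ψ y‖ = ε ^ d * ‖fourierTransformCLM ℂ ψ (ε • y)‖ := by
  have e1 : ∀ (η : SchwartzMap (Rd d) ℂ) (y : Rd d), fourierTransformCLM ℂ η y
     = ∫ v, Complex.exp (↑(-2 * Real.pi * ⟪v, y⟫) * Complex.I) • η v := by
    intro η y
    rw [SchwartzMap.fourierTransformCLM_apply, SchwartzMap.fourier_coe, Real.fourier_eq']
  rw [e1, e1]
  rw [← integral_add_right_eq_self _ γ]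
  have := MeasureTheory.Measure.integral_comp_smul (volume : Measure (Rd d))
    (fun v => Complex.exp (↑(-2 * Real.pi * ⟪v + γ, y⟫) * Complex.I) • Ψ (v + γ)) ε
  simp only [finrank_euclideanSpace, Fintype.card_fin] at this
  have h2 : (∫ v, Complex.exp (↑(-2 * Real.pi * ⟪v + γ, y⟫) * Complex.I) • Ψ (v + γ))
     = (ε ^ d : ℝ) • ∫ (x : Rd d), Complex.exp (↑(-2 * Real.pi * ⟪ε • x + γ, y⟫) * Complex.I) • Ψ (ε • x + γ) := by
    rw [this, smul_smul, abs_of_pos (by positivity), mul_inv_cancel₀ (by positivity), one_smul]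
  rw [h2, norm_smul, Real.norm_of_nonneg (by positivity)]
  congr 1
  have h3 : ∀ x : Rd d, Complex.exp (↑(-2 * Real.pi * ⟪ε • x + γ, y⟫) * Complex.I) • Ψ (ε • x + γ)
     = Complex.exp (↑(-2 * Real.pi * ⟪γ, y⟫) * Complex.I) *
       (Complex.exp (↑(-2 * Real.pi * ⟪x, ε • y⟫) * Complex.I) • ψ x) := by
    intro x
    rw [h, add_sub_cancel_right, smul_smul, inv_mul_cancel₀ hε.ne', one_smul, smul_eq_mul,
      smul_eq_mul, ← mul_assoc, ← Complex.exp_add, inner_add_left, real_inner_smul_left,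
      real_inner_smul_right]
    congr 2
    push_cast
    ring
  simp_rw [h3]
  rw [integral_const_mul, norm_mul, Complex.norm_exp_ofReal_mul_I, one_mul]

theorem density_bound {d : ℕ} (Λ : Set (Rd d)) (hΛ : BoundedDensity Λ) :
    ∃ C : ℝ, 0 ≤ C ∧ ∀ ε : ℝ, 0 < ε → ε ≤ 1 → ∀ T : Finset (Rd d), (T : Set (Rd d)) ⊆ Λ →
      ε ^ d * ∑ l ∈ T, ((1 + ‖ε • l‖) ^ (d + 1))⁻¹ ≤ C := by
  obtain ⟨hloc, N, hN⟩ := hΛ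
  set g : Rd d → ℝ := fun x => ((1 + ‖x‖) ^ (d + 1))⁻¹ with hg
  have hgpos : ∀ x, 0 ≤ g x := fun x => by positivity
  have hgi : Integrable g volume := by
    have := integrable_one_add_norm (E := Rd d) (μ := volume) (r := (d + 1 : ℕ)) (by simp)
    refine this.congr (Filter.Eventually.of_forall fun x => ?_)
    simp only [hg]
    rw [Real.rpow_neg (by positivity), Real.rpow_natCast]
  set V : ℝ := (volume (ball (0 : Rd d) 1)).toReal with hV
  have hVpos : 0 < V := ENNReal.toReal_pos (measure_ball_pos _ _ one_pos).ne' measure_ball_lt_top.ne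
  refine ⟨V⁻¹ * (2 ^ (d + 1) * (N * ∫ x, g x)), ?_, ?_⟩
  · have := integral_nonneg (μ := volume) (show (0 : Rd d → ℝ) ≤ g from hgpos)
    positivity
  intro ε hε hε1 T hT
  have hgei : Integrable (fun x => g (ε • x)) volume := hgi.comp_smul hε.ne'
  have hint : ∀ l : Rd d, V * g (ε • l) ≤ 2 ^ (d + 1) * ∫ x in ball l 1, g (ε • x) := by
    intro l
    have h1 : ∫ x in ball l 1, g (ε • l) ≤ ∫ x in ball l 1, 2 ^ (d + 1) * g (ε • x) := by
      refine setIntegral_mono_on ?_ ((hgei.const_mul _).integrableOn) measurableSet_ball ?_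
      · exact integrableOn_const measure_ball_lt_top.ne
      · intro x hx
        simp only [hg]
        rw [← div_eq_mul_inv, inv_eq_one_div, div_le_div_iff₀ (by positivity) (by positivity),
          one_mul, ← mul_pow]
        refine pow_le_pow_left₀ (by positivity) ?_ _
        rw [norm_smul, norm_smul, Real.norm_of_nonneg hε.le]
        have : ‖x‖ ≤ ‖l‖ + 1 := by
          have h5 := norm_le_norm_add_norm_sub l x
          rw [mem_ball, dist_eq_norm] at hx
          rw [norm_sub_rev] at hx
          linarith
        nlinarith [mul_nonneg hε.le (norm_nonneg l), mul_le_mul_of_nonneg_left this hε.le]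
    rw [setIntegral_const, integral_const_mul] at h1
    rw [smul_eq_mul, measureReal_def, Measure.addHaar_ball_center] at h1
    exact h1
  have hsum : ∑ l ∈ T, ∫ x in ball l 1, g (ε • x) ≤ N * ∫ x, g (ε • x) := by
    simp_rw [← integral_indicator measurableSet_ball]
    rw [← integral_finsetSum _ fun l _ => hgei.indicator measurableSet_ball, ← integral_const_mul]
    refine integral_mono (integrable_finsetSum _ fun l _ => hgei.indicator measurableSet_ball)
      (hgei.const_mul _) fun x => ?_
    classical
    simp only [Set.indicator_apply, mem_ball]
    rw [← Finset.sum_filter, Finset.sum_const, nsmul_eq_mul]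
    refine mul_le_mul_of_nonneg_right ?_ (hgpos _)
    norm_cast
    refine le_trans ?_ (hN x)
    rw [← Set.ncard_coe_finset]
    refine Set.ncard_le_ncard ?_ (hloc x 1)
    intro l hl
    simp only [Finset.coe_filter, Set.mem_ofPred_eq] at hl
    exact ⟨hT hl.1, by rw [mem_ball, dist_comm]; exact hl.2⟩
  have hsc : ∫ x, g (ε • x) = (ε ^ d)⁻¹ * ∫ x, g x := by
    rw [MeasureTheory.Measure.integral_comp_smul]
    simp only [finrank_euclideanSpace, Fintype.card_fin, smul_eq_mul]
    rw [abs_of_pos (by positivity)]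
  have h2 : V * ∑ l ∈ T, g (ε • l) ≤ 2 ^ (d + 1) * (N * ((ε ^ d)⁻¹ * ∫ x, g x)) := by
    rw [Finset.mul_sum, ← hsc]
    refine (Finset.sum_le_sum fun l _ => hint l).trans ?_
    rw [← Finset.mul_sum]
    exact mul_le_mul_of_nonneg_left hsum (by positivity)
  change ε ^ d * ∑ l ∈ T, g (ε • l) ≤ _
  rw [inv_mul_eq_div, le_div_iff₀ hVpos]
  calc ε ^ d * (∑ l ∈ T, g (ε • l)) * V = ε ^ d * (V * ∑ l ∈ T, g (ε • l)) := by ring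
    _ ≤ ε ^ d * (2 ^ (d + 1) * (N * ((ε ^ d)⁻¹ * ∫ x, g x))) :=
        mul_le_mul_of_nonneg_left h2 (by positivity)
    _ = _ := by field_simp

theorem fourier_bound {d : ℕ} (a : Rd d → ℂ) (f : TemperedDist d)
    (hrep : RepMeasure a f) (hbdd : ∃ C : ℝ, ∀ x, ‖a x‖ ≤ C)
    (hBD : BoundedDensity {x | a x ≠ 0}) :
    ∃ q : SchwartzMap (Rd d) ℂ → ℝ, Continuous q ∧ q 0 = 0 ∧
      ∀ (ε : ℝ) (γ : Rd d) (ψ Ψ : SchwartzMap (Rd d) ℂ), 0 < ε → ε ≤ 1 →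
        (∀ x, Ψ x = ψ (ε⁻¹ • (x - γ))) → ‖fourierTD f Ψ‖ ≤ q ψ := by
  obtain ⟨A, hA⟩ := hbdd
  have hA0 : 0 ≤ A := (norm_nonneg _).trans (hA 0)
  obtain ⟨C, hC0, hC⟩ := density_bound _ hBD
  obtain ⟨_, hsum, hf⟩ := hrep
  set M : SchwartzMap (Rd d) ℂ → ℝ := fun η => 2 ^ d * (SchwartzMap.seminorm ℂ 0 0 η +
    SchwartzMap.seminorm ℂ (d + 1) 0 η) with hM
  have hM0 : ∀ η, 0 ≤ M η := fun η => by
    have h1 := apply_nonneg (SchwartzMap.seminorm (E := Rd d) (F := ℂ) ℂ 0 0) η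
    have h2 := apply_nonneg (SchwartzMap.seminorm (E := Rd d) (F := ℂ) ℂ (d + 1) 0) η
    positivity
  have hMc : Continuous M := by
    have h1 := (schwartz_withSeminorms ℂ (Rd d) ℂ).continuous_seminorm (0, 0)
    have h2 := (schwartz_withSeminorms ℂ (Rd d) ℂ).continuous_seminorm (d + 1, 0)
    exact continuous_const.mul (h1.add h2)
  have hMb : ∀ η (y : Rd d), ‖η y‖ ≤ M η * ((1 + ‖y‖) ^ (d + 1))⁻¹ := by
    intro η y
    rw [← div_eq_mul_inv, le_div_iff₀ (by positivity)]
    have h0 := add_pow_le zero_le_one (norm_nonneg y) (d + 1)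
    have h1 := SchwartzMap.norm_pow_mul_le_seminorm ℂ η 0 y
    have h2 := SchwartzMap.norm_pow_mul_le_seminorm ℂ η (d + 1) y
    simp only [Nat.add_sub_cancel, one_pow] at h0
    calc ‖η y‖ * (1 + ‖y‖) ^ (d + 1) ≤ ‖η y‖ * (2 ^ d * (1 + ‖y‖ ^ (d + 1))) := by gcongr
      _ = 2 ^ d * (‖y‖ ^ 0 * ‖η y‖ + ‖y‖ ^ (d + 1) * ‖η y‖) := by ring
      _ ≤ _ := by simp only [hM]; gcongr
  refine ⟨fun ψ => A * M (fourierTransformCLM ℂ ψ) * C, ?_, ?_, ?_⟩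
  · exact (continuous_const.mul (hMc.comp (fourierTransformCLM ℂ).continuous)).mul continuous_const
  · simp [hM]
  intro ε γ ψ Ψ hε hε1 h
  change ‖f (fourierTransformCLM ℂ Ψ)‖ ≤ _
  rw [hf]
  have hs := hsum (fourierTransformCLM ℂ Ψ)
  have hs' : Summable fun l => ‖a l * fourierTransformCLM ℂ Ψ l‖ := by
    simpa only [norm_mul] using hs
  refine (norm_tsum_le_tsum_norm hs').trans ?_
  refine hs'.tsum_le_of_sum_le fun s => ?_
  classical
  have h1 : ∑ l ∈ s, ‖a l * fourierTransformCLM ℂ Ψ l‖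
      = ∑ l ∈ s.filter (fun l => a l ≠ 0), ‖a l * fourierTransformCLM ℂ Ψ l‖ := by
    symm
    refine Finset.sum_subset (Finset.filter_subset _ _) fun l hl hl' => ?_
    have : a l = 0 := by
      by_contra h; exact hl' (Finset.mem_filter.2 ⟨hl, h⟩)
    simp [this]
  rw [h1]
  set T := s.filter (fun l => a l ≠ 0) with hT
  have h2 := hC ε hε hε1 T (by
    intro l hl
    exact (Finset.mem_filter.1 (Finset.mem_coe.1 hl)).2)
  calc ∑ l ∈ T, ‖a l * fourierTransformCLM ℂ Ψ l‖
      ≤ ∑ l ∈ T, A * (ε ^ d * (M (fourierTransformCLM ℂ ψ) * ((1 + ‖ε • l‖) ^ (d + 1))⁻¹)) := by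
        refine Finset.sum_le_sum fun l _ => ?_
        rw [norm_mul, fourier_scale ψ Ψ ε hε γ h l]
        have := hMb (fourierTransformCLM ℂ ψ) (ε • l)
        have := hA l
        gcongr
    _ = A * M (fourierTransformCLM ℂ ψ) * (ε ^ d * ∑ l ∈ T, ((1 + ‖ε • l‖) ^ (d + 1))⁻¹) := by
        rw [Finset.mul_sum, Finset.mul_sum]
        refine Finset.sum_congr rfl fun l _ => ?_
        ring
    _ ≤ _ := mul_le_mul_of_nonneg_left h2 (mul_nonneg hA0 (hM0 _))

theorem tendsto_zoom {d : ℕ} (φ χ : SchwartzMap (Rd d) ℂ) (hχ : HasCompactSupport (⇑χ))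
    (γ : Rd d) (h0 : φ γ = 0) :
    ∃ ψ : ℝ → SchwartzMap (Rd d) ℂ, (∀ ε u, ψ ε u = φ (γ + ε • u) * χ u) ∧
      Tendsto ψ (𝓝[>] 0) (𝓝 0) := by
  have hsm : ∀ ε : ℝ, ContDiff ℝ ∞ (fun u : Rd d => φ (γ + ε • u)) := fun ε =>
    (φ.smooth ⊤).comp (show ContDiff ℝ ∞ (fun u : Rd d => γ + ε • u) by fun_prop)
  have hψ : ∀ ε : ℝ, ∃ ψ : SchwartzMap (Rd d) ℂ, ⇑ψ = fun u => φ (γ + ε • u) * χ u := fun ε =>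
    exists_schwartz _ (HasCompactSupport.mul_left hχ) ((hsm ε).mul (χ.smooth ⊤))
  choose ψ hψ using hψ
  refine ⟨ψ, fun ε u => by rw [hψ], ?_⟩
  -- derivative bound for the zoomed function
  have hD : ∀ i : ℕ, ∃ B : ℝ, 0 ≤ B ∧ ∀ ε : ℝ, 0 < ε → ε ≤ 1 → ∀ u : Rd d,
      ‖iteratedFDeriv ℝ i (fun u : Rd d => φ (γ + ε • u)) u‖ ≤ B * ε * (1 + ‖u‖) := by
    intro i
    rcases Nat.eq_zero_or_pos i with rfl | hi
    · obtain ⟨B, hB0, hB⟩ := φ.decay 0 1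
      refine ⟨B, hB0.le, fun ε hε hε1 u => ?_⟩
      rw [norm_iteratedFDeriv_zero]
      have := Convex.norm_image_sub_le_of_norm_fderiv_le (𝕜 := ℝ) (f := φ) (C := B) (s := univ)
        (fun x _ => φ.differentiableAt) (fun x _ => by
          have := hB x
          rwa [pow_zero, one_mul, norm_iteratedFDeriv_one] at this) convex_univ
          (mem_univ γ) (mem_univ (γ + ε • u))
      rw [h0, sub_zero, add_sub_cancel_left, norm_smul, Real.norm_of_nonneg hε.le] at this
      refine this.trans ?_
      rw [← mul_assoc]
      have : 0 ≤ B * ε := by positivity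
      nlinarith
    · obtain ⟨B, hB0, hB⟩ := φ.decay 0 i
      refine ⟨B, hB0.le, fun ε hε hε1 u => ?_⟩
      have hc : ContDiff ℝ i (fun z : Rd d => φ (γ + z)) :=
        (φ.smooth i).comp (contDiff_const.add contDiff_id)
      have e := iteratedFDeriv_comp_const_smul ε hc
      rw [e]
      simp only
      rw [iteratedFDeriv_comp_add_left, norm_smul, Real.norm_of_nonneg (by positivity)]
      have h1 := hB (γ + ε • u)
      rw [pow_zero, one_mul] at h1
      have h2 : ε ^ i ≤ ε := by
        simpa using pow_le_pow_of_le_one hε.le hε1 hi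
      calc ε ^ i * ‖iteratedFDeriv ℝ i (⇑φ) (γ + ε • u)‖ ≤ ε * B := by gcongr
        _ = B * ε * 1 := by ring
        _ ≤ _ := by
          have := norm_nonneg u
          gcongr; linarith
  choose B hB0 hB using hD
  rw [(schwartz_withSeminorms ℂ (Rd d) ℂ).tendsto_nhds]
  rintro ⟨k, n⟩ δ hδ
  have hχd : ∀ i, ∃ D : ℝ, 0 ≤ D ∧ ∀ u : Rd d,
      ‖u‖ ^ k * (1 + ‖u‖) * ‖iteratedFDeriv ℝ i (⇑χ) u‖ ≤ D := by
    intro i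
    obtain ⟨D1, h10, h1⟩ := χ.decay k i
    obtain ⟨D2, h20, h2⟩ := χ.decay (k + 1) i
    refine ⟨D1 + D2, by positivity, fun u => ?_⟩
    calc _ = ‖u‖ ^ k * ‖iteratedFDeriv ℝ i (⇑χ) u‖ + ‖u‖ ^ (k + 1) * ‖iteratedFDeriv ℝ i (⇑χ) u‖ := by
          ring
      _ ≤ _ := add_le_add (h1 u) (h2 u)
  choose D hD0 hD using hχd
  set K : ℝ := ∑ i ∈ Finset.range (n + 1), (n.choose i : ℝ) * B i * D (n - i) with hK
  have hK0 : 0 ≤ K := Finset.sum_nonneg fun i _ =>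
    mul_nonneg (mul_nonneg (Nat.cast_nonneg _) (hB0 i)) (hD0 _)
  have hbound : ∀ ε : ℝ, 0 < ε → ε ≤ 1 → SchwartzMap.seminorm ℂ k n (ψ ε) ≤ ε * K := by
    intro ε hε hε1
    refine SchwartzMap.seminorm_le_bound ℂ k n _ (by positivity) fun u => ?_
    rw [hψ]
    have h1 := norm_iteratedFDeriv_mul_le (hsm ε) (χ.smooth ⊤) u (n := n) (by exact_mod_cast le_top)
    calc _ ≤ ‖u‖ ^ k * ∑ i ∈ Finset.range (n + 1), (n.choose i : ℝ) *
          ‖iteratedFDeriv ℝ i (fun u : Rd d => φ (γ + ε • u)) u‖ *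
            ‖iteratedFDeriv ℝ (n - i) (⇑χ) u‖ := by gcongr
      _ = ∑ i ∈ Finset.range (n + 1), ‖u‖ ^ k * ((n.choose i : ℝ) *
          ‖iteratedFDeriv ℝ i (fun u : Rd d => φ (γ + ε • u)) u‖ *
            ‖iteratedFDeriv ℝ (n - i) (⇑χ) u‖) := by rw [Finset.mul_sum]
      _ ≤ ∑ i ∈ Finset.range (n + 1), ε * ((n.choose i : ℝ) * B i * D (n - i)) := by
          refine Finset.sum_le_sum fun i _ => ?_
          calc _ ≤ ‖u‖ ^ k * ((n.choose i : ℝ) * (B i * ε * (1 + ‖u‖)) *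
                ‖iteratedFDeriv ℝ (n - i) (⇑χ) u‖) := by
                have := hB i ε hε hε1 u
                gcongr
            _ = ε * ((n.choose i : ℝ) * B i *
                (‖u‖ ^ k * (1 + ‖u‖) * ‖iteratedFDeriv ℝ (n - i) (⇑χ) u‖)) := by ring
            _ ≤ _ := by
                have := hD (n - i) u
                have := hB0 i
                gcongr
      _ = ε * K := by rw [hK, Finset.mul_sum]
  have hη : 0 < min 1 (δ / (K + 1)) := by positivity
  filter_upwards [Ioo_mem_nhdsGT hη] with ε hε
  have h1 := hbound ε hε.1 (hε.2.le.trans (min_le_left _ _))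
  rw [sub_zero]
  refine lt_of_le_of_lt h1 ?_
  have h2 : ε < δ / (K + 1) := hε.2.trans_le (min_le_right _ _)
  rw [lt_div_iff₀ (by positivity)] at h2
  nlinarith [hε.1]

theorem exists_bump (d : ℕ) : ∃ χ : SchwartzMap (Rd d) ℂ, HasCompactSupport (⇑χ) ∧
    (∀ x, ‖x‖ ≤ 1 → χ x = 1) ∧ (∀ x, 2 ≤ ‖x‖ → χ x = 0) := by
  let β : ContDiffBump (0 : Rd d) := ⟨1, 2, one_pos, one_lt_two⟩
  obtain ⟨χ, hχ⟩ := exists_schwartz (fun x => ((β x : ℝ) : ℂ))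
    (β.hasCompactSupport.comp_left (g := fun r : ℝ => (r : ℂ)) (by simp))
    (Complex.ofRealCLM.contDiff.comp β.contDiff)
  refine ⟨χ, ?_, ?_, ?_⟩
  · rw [hχ]
    exact β.hasCompactSupport.comp_left (g := fun r : ℝ => (r : ℂ)) (by simp)
  · intro x hx
    rw [hχ]
    simp only
    rw [β.one_of_mem_closedBall (by simpa [β] using hx)]; simp
  · intro x hx
    rw [hχ]
    simp only
    rw [β.zero_of_le_dist (by simpa [β] using hx)]; simp

theorem exists_dilate {d : ℕ} (χ : SchwartzMap (Rd d) ℂ) (hχ : HasCompactSupport (⇑χ))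
    (ε : ℝ) (hε : 0 < ε) (γ : Rd d) :
    ∃ Φ : SchwartzMap (Rd d) ℂ, (∀ x, Φ x = χ (ε⁻¹ • (x - γ))) ∧ HasCompactSupport (⇑Φ) := by
  have hc : HasCompactSupport (fun x => χ (ε⁻¹ • (x - γ))) :=
    hχ.comp_homeomorph ((Homeomorph.subRight γ).trans
      (Homeomorph.smulOfNeZero ε⁻¹ (inv_ne_zero hε.ne')))
  obtain ⟨Φ, hΦ⟩ := exists_schwartz (fun x => χ (ε⁻¹ • (x - γ))) hc
    ((χ.smooth ⊤).comp (show ContDiff ℝ ∞ (fun x : Rd d => ε⁻¹ • (x - γ)) by fun_prop))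
  exact ⟨Φ, fun x => by rw [hΦ], by rwa [hΦ]⟩

theorem vanish_of_zero {d : ℕ} (F : TemperedDist d)
    (q : SchwartzMap (Rd d) ℂ → ℝ) (hq : Continuous q) (hq0 : q 0 = 0)
    (hF : ∀ (ε : ℝ) (γ : Rd d) (ψ Ψ : SchwartzMap (Rd d) ℂ), 0 < ε → ε ≤ 1 →
        (∀ x, Ψ x = ψ (ε⁻¹ • (x - γ))) → ‖F Ψ‖ ≤ q ψ) (S : Finset (Rd d)) :
    ∀ φ : SchwartzMap (Rd d) ℂ, HasCompactSupport (⇑φ) → (∀ x ∈ tdSupport F, φ x = 0) →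
      tdSupport F ∩ tsupport (⇑φ) ⊆ S → F φ = 0 := by
  classical
  induction S using Finset.induction_on with
  | empty =>
    intro φ hc _ hS
    refine vanish_off F φ hc ?_
    rw [Set.disjoint_iff, Set.inter_comm]
    simpa using hS
  | insert γ S _ ih =>
    intro φ hc hz hS
    by_cases hγ : γ ∈ tdSupport F
    swap
    · refine ih φ hc hz fun x hx => ?_
      have := hS hx
      simp only [Finset.coe_insert, Set.mem_insert_iff] at this
      rcases this with rfl | h
      · exact absurd hx.1 hγ
      · exact h
    obtain ⟨χ, hχc, hχ1, -⟩ := exists_bump d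
    obtain ⟨ψ, hψ, hlim⟩ := tendsto_zoom φ χ hχc γ (hz γ hγ)
    have hle : ∀ ε : ℝ, 0 < ε → ε ≤ 1 → ‖F φ‖ ≤ q (ψ ε) := by
      intro ε hε hε1
      obtain ⟨Φ, hΦ, hΦc⟩ := exists_dilate χ hχc ε hε γ
      obtain ⟨φ₂, hφ₂⟩ := exists_schwartz (fun x => Φ x * φ x)
        (HasCompactSupport.mul_left hc) ((Φ.smooth ⊤).mul (φ.smooth ⊤))
      have e1 : ⇑(φ - φ₂) = fun x => (1 - Φ x) * φ x := by
        ext x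
        rw [sub_apply, hφ₂]; ring
      have h1 : F (φ - φ₂) = 0 := by
        refine ih _ ?_ ?_ ?_
        · rw [e1]; exact HasCompactSupport.mul_left hc
        · intro x hx
          rw [e1]; simp [hz x hx]
        · rintro x ⟨hx, hx'⟩
          have hx2 : x ∈ tsupport (⇑φ) := by
            rw [e1] at hx'
            exact tsupport_mul_subset_right hx'
          have := hS ⟨hx, hx2⟩
          simp only [Finset.coe_insert, Set.mem_insert_iff] at this
          rcases this with rfl | h
          swap
          · exact h
          exfalso
          refine notMem_tsupport_iff_eventuallyEq.2 ?_ hx'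
          rw [e1]
          filter_upwards [Metric.ball_mem_nhds x hε] with y hy
          rw [hΦ, hχ1]
          · simp
          · rw [norm_smul, norm_inv, Real.norm_of_nonneg hε.le, inv_mul_le_iff₀ hε, mul_one,
              ← dist_eq_norm]
            exact (mem_ball.1 hy).le
      have h2 : F φ = F φ₂ := by
        rw [map_sub, sub_eq_zero] at h1; exact h1
      rw [h2]
      refine hF ε γ (ψ ε) φ₂ hε hε1 fun x => ?_
      rw [hψ, hφ₂, smul_smul, mul_inv_cancel₀ hε.ne', one_smul, add_sub_cancel]
      simp only
      rw [hΦ, mul_comm]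
    have hl2 : Tendsto (fun ε => q (ψ ε)) (𝓝[>] 0) (𝓝 0) := by
      have := (hq.tendsto 0).comp hlim
      rwa [hq0] at this
    have h3 : ‖F φ‖ ≤ 0 := by
      refine ge_of_tendsto hl2 ?_
      filter_upwards [Ioo_mem_nhdsGT (zero_lt_one' ℝ)] with ε hε
      exact hle ε hε.1 hε.2.le
    exact norm_le_zero_iff.1 h3

/-- (Last part of Proposition 3.) If `μ` is a pure point
measure in `S*(ℝ^d)` with uniformly bounded masses, support of bounded density
and locally finite spectrum, then `μ̂` is a pure point measure with uniformly
bounded masses. -/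
theorem statement11 {d : ℕ} (a : Rd d → ℂ) (f : TemperedDist d)
    (hrep : RepMeasure a f)
    (hbdd : ∃ C : ℝ, ∀ x, ‖a x‖ ≤ C)
    (hBD : BoundedDensity {x | a x ≠ 0})
    (hΓ : LocFinite (tdSupport (fourierTD f))) :
    ∃ b : Rd d → ℂ,
      {x | b x ≠ 0}.Countable ∧
      (∀ φ : SchwartzMap (Rd d) ℂ, HasCompactSupport (⇑φ) →
        fourierTD f φ = ∑' x : Rd d, b x * φ x) ∧
      ∃ C' : ℝ, ∀ x, ‖b x‖ ≤ C' := by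
  obtain ⟨q, hq, hq0, hF⟩ := fourier_bound a f hrep hbdd hBD
  set F := fourierTD f with hFdef
  obtain ⟨χ, hχc, hχ1, hχ2⟩ := exists_bump d
  have hε : ∀ γ : Rd d, ∃ ε : ℝ, 0 < ε ∧ ε ≤ 1 ∧
      ∀ x ∈ tdSupport F, x ∈ ball γ (2 * ε) → x = γ := by
    intro γ
    have hfin : ((tdSupport F ∩ ball γ 1) \ {γ}).Finite := (hΓ γ 1).subset sdiff_subset
    have hn : ((tdSupport F ∩ ball γ 1) \ {γ})ᶜ ∈ 𝓝 γ :=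
      hfin.isClosed.isOpen_compl.mem_nhds (by simp)
    obtain ⟨δ, hδ, hδs⟩ := Metric.mem_nhds_iff.1 hn
    refine ⟨min (δ / 2) (1 / 2), by positivity, (min_le_right _ _).trans (by norm_num), ?_⟩
    intro x hx hxb
    by_contra hne
    have h1 : x ∈ ball γ δ := ball_subset_ball (by linarith [min_le_left (δ / 2) (1 / 2 : ℝ)]) hxb
    have h2 : x ∈ ball γ 1 := ball_subset_ball (by linarith [min_le_right (δ / 2) (1 / 2 : ℝ)]) hxb
    exact hδs h1 ⟨⟨hx, h2⟩, hne⟩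
  choose ε hε0 hε1 hεs using hε
  have hΦ : ∀ γ, ∃ Φ : SchwartzMap (Rd d) ℂ, (∀ x, Φ x = χ ((ε γ)⁻¹ • (x - γ))) ∧
      HasCompactSupport (⇑Φ) := fun γ => exists_dilate χ hχc (ε γ) (hε0 γ) γ
  choose Φ hΦ hΦc using hΦ
  have hΦself : ∀ γ, Φ γ γ = 1 := fun γ => by rw [hΦ]; exact hχ1 _ (by simp)
  have hΦne : ∀ γ, ∀ x ∈ tdSupport F, x ≠ γ → Φ γ x = 0 := by
    intro γ x hx hne
    rw [hΦ]
    refine hχ2 _ ?_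
    have h1 : 2 * ε γ ≤ dist x γ := by
      by_contra h
      exact hne (hεs γ x hx (mem_ball.2 (not_le.1 h)))
    rw [norm_smul, norm_inv, Real.norm_of_nonneg (hε0 γ).le, ← dist_eq_norm,
      le_inv_mul_iff₀ (hε0 γ)]
    linarith
  classical
  refine ⟨fun x => if x ∈ tdSupport F then F (Φ x) else 0, ?_, ?_, q χ, ?_⟩
  · have : (⋃ n : ℕ, tdSupport F ∩ ball 0 n).Countable :=
      Set.countable_iUnion fun n => (hΓ 0 n).countable
    refine this.mono fun x hx => ?_
    have hx' : x ∈ tdSupport F := by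
      by_contra h
      exact hx (by simp [h])
    obtain ⟨n, hn⟩ := exists_nat_gt ‖x‖
    exact Set.mem_iUnion.2 ⟨n, hx', by simpa using hn⟩
  · intro φ hc
    have hfin : (tdSupport F ∩ tsupport (⇑φ)).Finite := by
      obtain ⟨R, hR⟩ := hc.isBounded.subset_ball (0 : Rd d)
      exact (hΓ 0 R).subset (Set.inter_subset_inter_right _ hR)
    set S := hfin.toFinset with hS
    have hSm : ∀ x, x ∈ S ↔ x ∈ tdSupport F ∧ x ∈ tsupport (⇑φ) := fun x => by simp [hS]
    have hcs : ∀ T : Finset (Rd d), HasCompactSupport (⇑(∑ γ ∈ T, φ γ • Φ γ)) := by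
      intro T
      induction T using Finset.induction_on with
      | empty => simpa using (HasCompactSupport.zero : HasCompactSupport (0 : Rd d → ℂ))
      | insert γ T hγ ih =>
        rw [Finset.sum_insert hγ]
        have h1 : HasCompactSupport (⇑(φ γ • Φ γ)) := by
          have : ⇑(φ γ • Φ γ) = fun x => φ γ * Φ γ x := rfl
          rw [this]
          exact HasCompactSupport.mul_left (hΦc γ)
        exact h1.add ih
    have hc' : HasCompactSupport (⇑(φ - ∑ γ ∈ S, φ γ • Φ γ)) := hc.sub (hcs S)
    have hv : ∀ x ∈ tdSupport F, (φ - ∑ γ ∈ S, φ γ • Φ γ) x = 0 := by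
      intro x hx
      rw [sub_apply, sum_apply]
      have : ∑ γ ∈ S, (φ γ • Φ γ) x = φ x := by
        rw [Finset.sum_eq_single x]
        · rw [smul_apply, hΦself]; simp
        · intro γ _ hne
          rw [smul_apply, hΦne γ x hx hne.symm, smul_zero]
        · intro hxS
          have : x ∉ tsupport (⇑φ) := fun h => hxS ((hSm x).2 ⟨hx, h⟩)
          rw [smul_apply, image_eq_zero_of_notMem_tsupport this, zero_smul]
      rw [this, sub_self]
    have hfin' : (tdSupport F ∩ tsupport (⇑(φ - ∑ γ ∈ S, φ γ • Φ γ))).Finite := by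
      obtain ⟨R, hR⟩ := hc'.isBounded.subset_ball (0 : Rd d)
      exact (hΓ 0 R).subset (Set.inter_subset_inter_right _ hR)
    have h0 := vanish_of_zero F q hq hq0 hF hfin'.toFinset _ hc' hv (by simp)
    rw [map_sub, sub_eq_zero, map_sum] at h0
    rw [h0, tsum_eq_sum (s := S)]
    · refine Finset.sum_congr rfl fun γ hγ => ?_
      dsimp only
      rw [if_pos ((hSm γ).1 hγ).1, map_smul, smul_eq_mul, mul_comm]
    · intro x hx
      by_cases h : x ∈ tdSupport F
      · have : x ∉ tsupport (⇑φ) := fun h' => hx ((hSm x).2 ⟨h, h'⟩)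
        rw [image_eq_zero_of_notMem_tsupport this, mul_zero]
      · dsimp only
        rw [if_neg h, zero_mul]
  · intro x
    have hb := hF (ε x) x χ (Φ x) (hε0 x) (hε1 x) (hΦ x)
    dsimp only
    split_ifs
    · exact hb
    · rw [norm_zero]; exact (norm_nonneg _).trans hb
end
end
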